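/- Let T be a set of transpositions of Sym(n) (n ≥ 4) whose transposition graph G(T) is unicyclic and triangle-free, and let UG_n = Cay(Sym(n), T). Then the cyclic connectivity of UG_n equals 4n − 8: the minimum size of a vertex set F such that UG_n − F is disconnected with at least two components containing cycles is exactly 4n − 8. -/

import Mathlib

/-- Cayley graph of `Sym(n)` with connection set `T`. -/
def cayley {n : ℕ} (T : Set (Equiv.Perm (Fin n))) : SimpleGraph (Equiv.Perm (Fin n)) :=
  SimpleGraph.fromRel fun g h => g⁻¹ * h ∈ T

/-- Transposition generating graph `G(T)` on `{1,…,n}`. -/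
def transGraph {n : ℕ} (T : Set (Equiv.Perm (Fin n))) : SimpleGraph (Fin n) :=
  SimpleGraph.fromRel fun i j => Equiv.swap i j ∈ T

/-- `T` is a set of transpositions. -/
def IsTranspositionSet {n : ℕ} (T : Set (Equiv.Perm (Fin n))) : Prop :=
  ∀ t ∈ T, ∃ i j : Fin n, i ≠ j ∧ t = Equiv.swap i j

/-- A unicyclic graph: connected with exactly one cycle, equivalently
connected with as many edges as vertices. -/
def IsUnicyclic {V : Type*} [Fintype V] (G : SimpleGraph V) : Prop :=
  G.Connected ∧ G.edgeSet.ncard = Fintype.card V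
/-- `F` is a cyclic vertex cut of `G`: `G - F` is disconnected and at least two of
its connected components contain a cycle. -/
def CyclicCut {V : Type*} (G : SimpleGraph V) (F : Set V) : Prop :=
  ¬ (G.induce Fᶜ).Preconnected ∧
    ∃ C₁ C₂ : (G.induce Fᶜ).ConnectedComponent, C₁ ≠ C₂ ∧
      (∃ v, (G.induce Fᶜ).connectedComponentMk v = C₁ ∧
        ∃ p : (G.induce Fᶜ).Walk v v, p.IsCycle) ∧
      (∃ v, (G.induce Fᶜ).connectedComponentMk v = C₂ ∧
        ∃ p : (G.induce Fᶜ).Walk v v, p.IsCycle)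

/-!
Generators act on the right, so along edges inside `X` the value at a vertex `k ∉ X` is constant:
the Cayley graph of `insert k X` splits into fibres, one for each value at `k`, which are copies of
the Cayley graph of `X` and are joined by the edges `swap k i`.

Building the unicyclic graph by attaching leaves to a tree and closing the cycle once, induction
along fibres shows that a set `R` has at least `|R| d + 1 - |R| (|R| + 1) / 2` outer neighbours,
where `d` is the number of generators. Closing the cycle is the delicate step, as then `d` grows by
two at once. A second induction along fibres shows that removing fewer than `4 n - 8` vertices
leaves one of any two separated parts with at most four vertices. In its base cases, four and five
vertices, the quadratic bound is too weak for the sets of intermediate size; there one counts the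
neighbours of each class of the bipartition (the signs) separately, by inclusion–exclusion with
Mantel's theorem bounding the number of pairs with two common neighbours.

A part containing a cycle has at least two elements of each sign. Two elements of the same sign have
at least `2 n - 2` neighbours, and removing the at most four elements of the part itself leaves
`4 n - 8` outer neighbours.

For the converse, a triangle-free unicyclic graph has two disjoint edges. Their transpositions
span a 4-cycle; it has at most `4 (n - 2)` outer neighbours, and another such 4-cycle avoids both it
and them.
-/

namespace TranspositionCayley

open Equiv Finset

section Neighborhoods

variable {V : Type*} [Fintype V] [DecidableEq V] (G : SimpleGraph V) [DecidableRel G.Adj]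

/-- The transpositions along the edges of `G` with both ends in `X`. They generate a copy of the
Cayley graph on each coset of `Sym(X)`. -/
def edgeSwaps (X : Finset V) : Finset (Perm V) :=
  {t | ∃ a ∈ X, ∃ b ∈ X, G.Adj a b ∧ t = swap a b}

/-- The neighbours of `x` in the Cayley graph generated by `edgeSwaps G X`; the generators act on
the right. -/
def neighbors (X : Finset V) (x : Perm V) : Finset (Perm V) :=
  (edgeSwaps G X).image (x * ·)

/-- The union of the neighbourhoods of the elements of `S`. -/
def jointNeighbors (X : Finset V) (S : Finset (Perm V)) : Finset (Perm V) :=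
  S.biUnion (neighbors G X)

/-- The outer vertex boundary of `R`: the neighbours of `R` outside `R`. -/
def outerNeighbors (X : Finset V) (R : Finset (Perm V)) : Finset (Perm V) :=
  jointNeighbors G X R \ R

variable {G} {X Y : Finset V} {R : Finset (Perm V)} {t x y : Perm V} {i k : V}

theorem mem_edgeSwaps :
    t ∈ edgeSwaps G X ↔ ∃ a ∈ X, ∃ b ∈ X, G.Adj a b ∧ t = swap a b := by
  simp [edgeSwaps]

theorem swap_mem_edgeSwaps (hk : k ∈ X) (hi : i ∈ X) (hki : G.Adj k i) :
    swap k i ∈ edgeSwaps G X :=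
  mem_edgeSwaps.2 ⟨k, hk, i, hi, hki, rfl⟩

theorem mul_self_of_mem_edgeSwaps (ht : t ∈ edgeSwaps G X) : t * t = 1 := by
  obtain ⟨a, -, b, -, -, rfl⟩ := mem_edgeSwaps.1 ht
  exact swap_mul_self a b

theorem inv_eq_self_of_mem_edgeSwaps (ht : t ∈ edgeSwaps G X) : t⁻¹ = t :=
  inv_eq_of_mul_eq_one_left (mul_self_of_mem_edgeSwaps ht)

theorem sign_of_mem_edgeSwaps (ht : t ∈ edgeSwaps G X) : Perm.sign t = -1 := by
  obtain ⟨a, -, b, -, hab, rfl⟩ := mem_edgeSwaps.1 ht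
  exact Perm.sign_swap hab.ne

theorem apply_eq_self_of_mem_edgeSwaps (ht : t ∈ edgeSwaps G X) (hk : k ∉ X) : t k = k := by
  obtain ⟨a, ha, b, hb, -, rfl⟩ := mem_edgeSwaps.1 ht
  exact swap_apply_of_ne_of_ne (ne_of_mem_of_not_mem ha hk).symm (ne_of_mem_of_not_mem hb hk).symm

theorem swap_notMem_edgeSwaps (hk : k ∉ X) (hki : k ≠ i) : swap k i ∉ edgeSwaps G X := fun h =>
  hki (by simpa using (apply_eq_self_of_mem_edgeSwaps h hk).symm)

theorem edgeSwaps_mono (h : X ⊆ Y) : edgeSwaps G X ⊆ edgeSwaps G Y := by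
  intro t ht
  obtain ⟨a, ha, b, hb, hab, rfl⟩ := mem_edgeSwaps.1 ht
  exact swap_mem_edgeSwaps (h ha) (h hb) hab

theorem mem_neighbors : y ∈ neighbors G X x ↔ x⁻¹ * y ∈ edgeSwaps G X := by
  simp [neighbors]

theorem mul_mem_neighbors (ht : t ∈ edgeSwaps G X) : x * t ∈ neighbors G X x :=
  mem_image_of_mem _ ht

theorem mem_neighbors_comm : y ∈ neighbors G X x ↔ x ∈ neighbors G X y := by
  suffices ∀ {x y : Perm V}, y ∈ neighbors G X x → x ∈ neighbors G X y from ⟨this, this⟩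
  intro x y h
  rw [mem_neighbors] at h ⊢
  rw [← inv_eq_self_of_mem_edgeSwaps h] at h
  simpa using h

theorem card_neighbors (x : Perm V) : #(neighbors G X x) = #(edgeSwaps G X) :=
  card_image_of_injective _ (mul_right_injective x)

theorem apply_eq_of_mem_neighbors (h : y ∈ neighbors G X x) (hk : k ∉ X) : y k = x k := by
  obtain ⟨t, ht, rfl⟩ := mem_image.1 h
  simp [apply_eq_self_of_mem_edgeSwaps ht hk]

theorem sign_of_mem_neighbors (h : y ∈ neighbors G X x) : Perm.sign y = -Perm.sign x := by
  obtain ⟨t, ht, rfl⟩ := mem_image.1 h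
  simp [sign_of_mem_edgeSwaps ht]

theorem mem_jointNeighbors : y ∈ jointNeighbors G X R ↔ ∃ r ∈ R, y ∈ neighbors G X r :=
  mem_biUnion

theorem mem_outerNeighbors :
    y ∈ outerNeighbors G X R ↔ (∃ r ∈ R, y ∈ neighbors G X r) ∧ y ∉ R := by
  rw [outerNeighbors, mem_sdiff, mem_jointNeighbors]

theorem neighbors_mono (h : X ⊆ Y) (x : Perm V) : neighbors G X x ⊆ neighbors G Y x :=
  image_subset_image (edgeSwaps_mono h)

theorem outerNeighbors_mono (h : X ⊆ Y) (R : Finset (Perm V)) :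
    outerNeighbors G X R ⊆ outerNeighbors G Y R :=
  sdiff_subset_sdiff (biUnion_mono fun r _ => neighbors_mono h r) Subset.rfl

end Neighborhoods

theorem filter_adj_eq_singleton {V : Type*} {G : SimpleGraph V} [DecidableRel G.Adj]
    {X : Finset V} {i k : V} (hi : i ∈ X) (hki : G.Adj k i)
    (huniq : ∀ j ∈ X, G.Adj k j → j = i) : {j ∈ X | G.Adj k j} = {i} := by
  ext j
  rw [mem_filter, mem_singleton]
  exact ⟨fun h => huniq j h.1 h.2, by rintro rfl; exact ⟨hi, hki⟩⟩

section TreesAndUnicyclicSets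

variable {V : Type*} [DecidableEq V] (G : SimpleGraph V)

/-- The vertex sets inducing a tree, presented by successively attaching leaves. -/
inductive TreeOn : Finset V → Prop
  | singleton (v : V) : TreeOn {v}
  | insert_leaf {X : Finset V} {k i : V} : TreeOn X → k ∉ X → i ∈ X → G.Adj k i →
      (∀ j ∈ X, G.Adj k j → j = i) → TreeOn (insert k X)

/-- The vertex sets inducing a unicyclic graph, presented by closing a cycle over a tree with a
vertex having exactly two neighbours in it and then successively attaching leaves. -/
inductive UnicyclicOn : Finset V → Prop
  | close_cycle {X : Finset V} {k i i' : V} : TreeOn G X → k ∉ X → i ∈ X → i' ∈ X → i ≠ i' →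
      G.Adj k i → G.Adj k i' →
      (∀ j ∈ X, G.Adj k j → j = i ∨ j = i') → UnicyclicOn (insert k X)
  | insert_leaf {X : Finset V} {k i : V} : UnicyclicOn X → k ∉ X → i ∈ X → G.Adj k i →
      (∀ j ∈ X, G.Adj k j → j = i) → UnicyclicOn (insert k X)

variable {G} [DecidableRel G.Adj] {X : Finset V} {i i' k : V}

theorem filter_adj_eq_pair (hi : i ∈ X) (hi' : i' ∈ X) (hki : G.Adj k i) (hki' : G.Adj k i')
    (huniq : ∀ j ∈ X, G.Adj k j → j = i ∨ j = i') : {j ∈ X | G.Adj k j} = {i, i'} := by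
  ext j
  rw [mem_filter, mem_insert, mem_singleton]
  exact ⟨fun h => huniq j h.1 h.2, by rintro (rfl | rfl) <;> exact ⟨‹_›, ‹_›⟩⟩

variable [Fintype V]

theorem edgeSwaps_insert (X : Finset V) (k : V) :
    edgeSwaps G (insert k X) = edgeSwaps G X ∪ {i ∈ X | G.Adj k i}.image (swap k) := by
  ext t
  simp only [mem_union, mem_edgeSwaps, mem_image, mem_filter, mem_insert]
  constructor
  · rintro ⟨a, rfl | ha, b, rfl | hb, hab, rfl⟩
    · exact absurd rfl hab.ne
    · exact Or.inr ⟨b, ⟨hb, hab⟩, rfl⟩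
    · exact Or.inr ⟨a, ⟨ha, hab.symm⟩, swap_comm _ _⟩
    · exact Or.inl ⟨a, ha, b, hb, hab, rfl⟩
  · rintro (⟨a, ha, b, hb, hab, rfl⟩ | ⟨i, ⟨hi, hki⟩, rfl⟩)
    · exact ⟨a, Or.inr ha, b, Or.inr hb, hab, rfl⟩
    · exact ⟨k, Or.inl rfl, i, Or.inr hi, hki, rfl⟩

theorem card_edgeSwaps_insert (hk : k ∉ X) :
    #(edgeSwaps G (insert k X)) = #(edgeSwaps G X) + #{i ∈ X | G.Adj k i} := by
  rw [edgeSwaps_insert, card_union_of_disjoint]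
  · congr 1
    exact card_image_of_injective _ fun i j h => by simpa using congrArg (· k) h
  · rw [disjoint_right]
    intro t ht
    obtain ⟨i, hi, rfl⟩ := mem_image.1 ht
    exact swap_notMem_edgeSwaps hk (mem_filter.1 hi).2.ne

theorem card_edgeSwaps_insert_leaf (hk : k ∉ X) (hi : i ∈ X) (hki : G.Adj k i)
    (huniq : ∀ j ∈ X, G.Adj k j → j = i) :
    #(edgeSwaps G (insert k X)) = #(edgeSwaps G X) + 1 := by
  rw [card_edgeSwaps_insert hk, filter_adj_eq_singleton hi hki huniq, card_singleton]

theorem TreeOn.card_edgeSwaps (h : TreeOn G X) : #(edgeSwaps G X) + 1 = #X := by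
  induction h with
  | singleton v =>
    have : edgeSwaps G {v} = ∅ := by ext t; simp [mem_edgeSwaps]
    simp [this]
  | insert_leaf _ hk hi hki huniq ih =>
    rw [card_edgeSwaps_insert_leaf hk hi hki huniq, card_insert_of_notMem hk, ih]

theorem UnicyclicOn.card_edgeSwaps (h : UnicyclicOn G X) : #(edgeSwaps G X) = #X := by
  induction h with
  | close_cycle hT hk hi hi' hne hki hki' huniq =>
    rw [card_edgeSwaps_insert hk, filter_adj_eq_pair hi hi' hki hki' huniq, card_pair hne,
      card_insert_of_notMem hk, ← hT.card_edgeSwaps]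
  | insert_leaf _ hk hi hki huniq ih =>
    rw [card_edgeSwaps_insert_leaf hk hi hki huniq, card_insert_of_notMem hk, ih]

end TreesAndUnicyclicSets

section Fibers

variable {V : Type*} [DecidableEq V]

/-- The permutations in `R` sending `k` to `j`. Along edges inside a set avoiding `k` the value at
`k` is constant, so the Cayley graph splits along these fibres. -/
def fiber (R : Finset (Perm V)) (k j : V) : Finset (Perm V) := {r ∈ R | r k = j}

/-- The values at `k` of the permutations in `R`. -/
def values (R : Finset (Perm V)) (k : V) : Finset V := R.image (· k)

variable {R : Finset (Perm V)} {r : Perm V} {k j : V}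

theorem mem_fiber : r ∈ fiber R k j ↔ r ∈ R ∧ r k = j := mem_filter

theorem mem_values : j ∈ values R k ↔ ∃ r ∈ R, r k = j := mem_image

theorem card_fiber_pos (hj : j ∈ values R k) : 1 ≤ #(fiber R k j) := by
  obtain ⟨r, hr, hrk⟩ := mem_values.1 hj
  exact card_pos.2 ⟨r, mem_fiber.2 ⟨hr, hrk⟩⟩

theorem sum_card_fiber (R : Finset (Perm V)) (k : V) :
    ∑ j ∈ values R k, #(fiber R k j) = #R :=
  (card_eq_sum_card_image (fun r : Perm V => r k) R).symm

variable [Fintype V] {G : SimpleGraph V} [DecidableRel G.Adj] {X : Finset V}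

theorem fiber_outerNeighbors (hk : k ∉ X) (R : Finset (Perm V)) (j : V) :
    fiber (outerNeighbors G X R) k j = outerNeighbors G X (fiber R k j) := by
  ext y
  simp only [mem_fiber, mem_outerNeighbors]
  constructor
  · rintro ⟨⟨⟨r, hr, hy⟩, hyR⟩, hyk⟩
    exact ⟨⟨r, ⟨hr, (apply_eq_of_mem_neighbors hy hk).symm.trans hyk⟩, hy⟩, fun h => hyR h.1⟩
  · rintro ⟨⟨r, ⟨hr, hrk⟩, hy⟩, hyR⟩
    have hyk : y k = j := (apply_eq_of_mem_neighbors hy hk).trans hrk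
    exact ⟨⟨⟨r, hr, hy⟩, fun h => hyR ⟨h, hyk⟩⟩, hyk⟩

theorem values_outerNeighbors_subset (hk : k ∉ X) (R : Finset (Perm V)) :
    values (outerNeighbors G X R) k ⊆ values R k := by
  intro j hj
  obtain ⟨y, hy, rfl⟩ := mem_values.1 hj
  obtain ⟨⟨r, hr, hry⟩, -⟩ := mem_outerNeighbors.1 hy
  exact mem_values.2 ⟨r, hr, (apply_eq_of_mem_neighbors hry hk).symm⟩

theorem sum_card_outerNeighbors_fiber (hk : k ∉ X) (R : Finset (Perm V)) :
    ∑ j ∈ values R k, #(outerNeighbors G X (fiber R k j)) = #(outerNeighbors G X R) := by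
  rw [card_eq_sum_card_fiberwise (f := (· k)) (t := values R k)
    fun y hy => values_outerNeighbors_subset hk R (mem_values.2 ⟨y, hy, rfl⟩)]
  exact sum_congr rfl fun j _ => congrArg card (fiber_outerNeighbors hk R j).symm

end Fibers

theorem sum_sq_add_mul_le_sq_sum {ι R : Type*} [CommRing R] [LinearOrder R]
    [IsStrictOrderedRing R] (s : Finset ι) (f : ι → R) (hf : ∀ j ∈ s, 1 ≤ f j) :
    ∑ j ∈ s, f j ^ 2 + ((#s : R) - 1) * (2 * ∑ j ∈ s, f j - #s) ≤ (∑ j ∈ s, f j) ^ 2 := by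
  classical
  set m := ∑ j ∈ s, f j with hm
  -- convexity: a term `f j` lies between `1` and `m - (#s - 1)`
  have chord : ∀ j ∈ s, f j ^ 2 ≤ (m - #s + 2) * f j - (m - #s + 1) := by
    intro j hj
    have hothers : ((#s : R) - 1) ≤ ∑ i ∈ s.erase j, f i := by
      have := card_nsmul_le_sum (s.erase j) f 1 fun i hi => hf i (mem_of_mem_erase hi)
      rw [nsmul_one, ← Nat.cast_pred (card_pos.2 ⟨j, hj⟩), ← card_erase_of_mem hj] at *
      exact this
    have hsum := add_sum_erase s f hj
    nlinarith [mul_nonneg (sub_nonneg.2 (hf j hj))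
      (show 0 ≤ m - #s + 1 - f j by linarith)]
  have hsum := sum_le_sum chord
  rw [sum_sub_distrib, ← mul_sum, sum_const, nsmul_eq_mul, ← hm] at hsum
  nlinarith

/-! ### Local expansion -/

section LocalExpansion

variable {V : Type*} [Fintype V] [DecidableEq V]

/-- The quadratic vertex-isoperimetric inequality `|∂R| ≥ |R| d + 1 - |R| (|R| + 1) / 2` for the
Cayley graph generated by the edges inside `X`, cleared of denominators. -/
def LocalExpansion (G : SimpleGraph V) [DecidableRel G.Adj] (X : Finset V) (d : ℕ) : Prop :=
  ∀ R : Finset (Perm V), R.Nonempty →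
    2 * #R * d + 2 ≤ 2 * #(outerNeighbors G X R) + #R * (#R + 1)

variable {G : SimpleGraph V} [DecidableRel G.Adj] {X : Finset V} {d : ℕ} {i k : V}

theorem LocalExpansion.sum_fibers (hL : LocalExpansion G X d) (hk : k ∉ X)
    (R : Finset (Perm V)) :
    2 * (#R : ℤ) * d + 2 * #(values R k) ≤
      2 * #(outerNeighbors G X R) + ∑ j ∈ values R k, (#(fiber R k j) : ℤ) ^ 2 + #R := by
  have hfiber : ∀ j ∈ values R k, 2 * (#(fiber R k j) : ℤ) * d + 2 ≤
      2 * (#(outerNeighbors G X (fiber R k j)) : ℤ) + (#(fiber R k j) : ℤ) ^ 2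
        + #(fiber R k j) := by
    intro j hj
    have := hL (fiber R k j) (card_pos.1 (card_fiber_pos hj))
    zify at this
    linarith
  have hsum := sum_le_sum hfiber
  simp only [sum_add_distrib, ← mul_sum, ← sum_mul, sum_const, nsmul_eq_mul] at hsum
  have hcard := sum_card_fiber R k
  have hcardOuter := sum_card_outerNeighbors_fiber (G := G) hk R
  zify at hcard hcardOuter
  rw [hcard, hcardOuter] at hsum
  linarith

/-- When `R` lies in one fibre, its translate by `swap k i` lies in another one. -/
theorem card_outerNeighbors_add_card_le (hk : k ∉ X) (hi : i ∈ X) (hki : G.Adj k i)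
    {R : Finset (Perm V)} {a : V} (hR : ∀ r ∈ R, r k = a) :
    #(outerNeighbors G X R) + #R ≤ #(outerNeighbors G (insert k X) R) := by
  have hvalue : ∀ r ∈ R, (r * swap k i) k ≠ a := by
    intro r hr h
    rw [Perm.mul_apply, swap_apply_left, ← hR r hr] at h
    exact hki.ne (r.injective h).symm
  have hdisj : Disjoint (outerNeighbors G X R) (R.image (· * swap k i)) := by
    rw [disjoint_right]
    intro y hy hyX
    obtain ⟨r, hr, rfl⟩ := mem_image.1 hy
    obtain ⟨⟨s, hs, hsr⟩, -⟩ := mem_outerNeighbors.1 hyX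
    exact hvalue r hr ((apply_eq_of_mem_neighbors hsr hk).trans (hR s hs))
  have htranslate : R.image (· * swap k i) ⊆ outerNeighbors G (insert k X) R := by
    intro y hy
    obtain ⟨r, hr, rfl⟩ := mem_image.1 hy
    have hswap := swap_mem_edgeSwaps (mem_insert_self k X) (mem_insert_of_mem hi) hki
    exact mem_outerNeighbors.2
      ⟨⟨r, hr, mul_mem_neighbors hswap⟩, fun h => hvalue r hr (hR _ h)⟩
  rw [← card_image_of_injective R (mul_left_injective (swap k i)),
    ← card_union_of_disjoint hdisj]
  exact card_le_card (union_subset (outerNeighbors_mono (subset_insert k X) R) htranslate)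

theorem exists_forall_apply_eq_of_card_values_eq_one {V : Type*} [DecidableEq V]
    {R : Finset (Perm V)} {k : V} (h : #(values R k) = 1) : ∃ a, ∀ r ∈ R, r k = a := by
  obtain ⟨a, ha⟩ := card_eq_one.1 h
  exact ⟨a, fun r hr => mem_singleton.1 (ha ▸ mem_values.2 ⟨r, hr, rfl⟩)⟩

theorem LocalExpansion.insert (hL : LocalExpansion G X d) (hk : k ∉ X) (hi : i ∈ X)
    (hki : G.Adj k i) : LocalExpansion G (insert k X) (d + 1) := by
  intro R hR
  have hvalues : 1 ≤ #(values R k) := card_pos.2 (hR.image _)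
  rcases hvalues.eq_or_lt with hone | htwo
  · obtain ⟨a, ha⟩ := exists_forall_apply_eq_of_card_values_eq_one hone.symm
    have := card_outerNeighbors_add_card_le hk hi hki ha
    have := hL R hR
    linarith
  · have hfibers := hL.sum_fibers hk R
    have hsq := sum_sq_add_mul_le_sq_sum (values R k) (fun j => (#(fiber R k j) : ℤ))
      fun j hj => by exact_mod_cast card_fiber_pos hj
    have hcard := sum_card_fiber R k
    have hle : #(values R k) ≤ #R := card_image_le
    have hmono := card_le_card (outerNeighbors_mono (G := G) (subset_insert k X) R)
    zify at *
    rw [hcard] at hsq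
    have hgap : 0 ≤ (#(values R k) : ℤ) - 2 := by linarith
    nlinarith [mul_nonneg (sub_nonneg.2 hle) hgap,
      mul_nonneg hgap (show (0 : ℤ) ≤ #(values R k) + 1 by linarith)]

theorem TreeOn.localExpansion (h : TreeOn G X) : LocalExpansion G X (#X - 1) := by
  induction h with
  | singleton v =>
    intro R hR
    have : 1 ≤ #R := card_pos.2 hR
    simp only [card_singleton, Nat.sub_self, mul_zero]
    nlinarith
  | @insert_leaf X k i _ hk hi hki _ ih =>
    have := ih.insert hk hi hki
    rwa [Nat.sub_add_cancel (card_pos.2 ⟨i, hi⟩), ← Nat.add_sub_cancel (n := #X) (m := 1),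
      ← card_insert_of_notMem hk] at this

end LocalExpansion

section SwapFactorizations

variable {V : Type*} [DecidableEq V] {a b d e f p q : V} {g σ τ : Perm V}

theorem swap_eq_swap_of_apply_eq (hef : e ≠ f) (h : swap p q e = f) : swap p q = swap e f := by
  rcases eq_or_ne e p with rfl | hp
  · rw [swap_apply_left] at h; rw [h]
  rcases eq_or_ne e q with rfl | hq
  · rw [swap_apply_right] at h; rw [h, swap_comm]
  exact absurd ((swap_apply_of_ne_of_ne hp hq).symm.trans h) hef

theorem apply_left_ne_of_eq_swap_mul_swap (hef : e ≠ f) (h : g = swap e f * swap p q)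
    (hg : g ≠ 1) : g e ≠ e := by
  intro hge
  have hpq : swap p q = swap e f * g := by rw [h, swap_mul_self_mul]
  have hpqe : swap p q e = f := by rw [hpq, Perm.mul_apply, hge, swap_apply_left]
  rw [swap_eq_swap_of_apply_eq hef hpqe, swap_mul_self] at h
  exact hg h

theorem apply_right_ne_of_eq_swap_mul_swap (hef : e ≠ f) (h : g = swap e f * swap p q)
    (hg : g ≠ 1) : g f ≠ f :=
  apply_left_ne_of_eq_swap_mul_swap (p := p) (q := q) hef.symm (by rwa [swap_comm f e]) hg

theorem apply_eq_or_eq_of_commute_swap (hef : e ≠ f) (h : Commute g (swap e f)) :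
    g e = e ∨ g e = f := by
  by_contra! hcon
  have hconj := congrArg (· e) h.eq
  simp only [Perm.mul_apply, swap_apply_left, swap_apply_of_ne_of_ne hcon.1 hcon.2] at hconj
  exact hef (g.injective hconj).symm

theorem swap_eq_or_eq_of_disjoint (hσ : σ.IsSwap) (hτ : τ.IsSwap) (hστ : σ.Disjoint τ)
    (hef : e ≠ f) (h : σ * τ = swap e f * swap p q) : swap e f = σ ∨ swap e f = τ := by
  have mul_self : ∀ {ρ : Perm V}, ρ.IsSwap → ρ * ρ = 1 := by
    rintro ρ ⟨x, y, -, rfl⟩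
    exact swap_mul_self x y
  have eq_swap : ∀ {ρ : Perm V}, ρ.IsSwap → ρ e = f → swap e f = ρ := by
    rintro ρ ⟨x, y, -, rfl⟩ hρ
    exact (swap_eq_swap_of_apply_eq hef hρ).symm
  have hsq : (σ * τ) * (σ * τ) = 1 := by
    rw [hστ.commute.symm.mul_mul_mul_comm, mul_self hσ, mul_self hτ, one_mul]
  have hne : σ * τ ≠ 1 := fun hone => by
    obtain ⟨x, y, hxy, rfl⟩ := hσ
    exact hxy (swap_eq_one_iff.1 (hστ.mul_eq_one_iff.1 hone).1)
  have hpq : swap e f * (σ * τ) = swap p q := by rw [h, swap_mul_self_mul]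
  have hcomm : Commute (σ * τ) (swap e f) := by
    have hinv := congrArg (·⁻¹) hpq
    rw [swap_inv, ← hpq] at hinv
    rwa [mul_inv_rev (swap e f), swap_inv, inv_eq_of_mul_eq_one_left hsq] at hinv
  have hmove : (σ * τ) e = f :=
    (apply_eq_or_eq_of_commute_swap hef hcomm).resolve_left
      (apply_left_ne_of_eq_swap_mul_swap hef h hne)
  rcases hστ e with hfix | hfix
  · rw [hστ.commute.eq, Perm.mul_apply, hfix] at hmove
    exact Or.inr (eq_swap hτ hmove)
  · rw [Perm.mul_apply, hfix] at hmove
    exact Or.inl (eq_swap hσ hmove)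

theorem swap_eq_of_eq_swap_mul_swap (hbd : b ≠ d) (hef : e ≠ f)
    (h : swap a b * swap a d = swap e f * swap p q) :
    swap e f = swap a b ∨ swap e f = swap a d ∨ swap e f = swap b d := by
  have hne : swap a b * swap a d ≠ 1 := fun hone => hbd <| by
    simpa using congrArg (· a) (mul_eq_one_iff_eq_inv.1 hone)
  have moved : ∀ z, (swap a b * swap a d) z ≠ z → z = a ∨ z = b ∨ z = d := by
    intro z hz
    by_contra! hcon
    exact hz (by rw [Perm.mul_apply, swap_apply_of_ne_of_ne hcon.1 hcon.2.2,
      swap_apply_of_ne_of_ne hcon.1 hcon.2.1])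
  have he := moved e (apply_left_ne_of_eq_swap_mul_swap hef h hne)
  have hf := moved f (apply_right_ne_of_eq_swap_mul_swap hef h hne)
  grind [swap_comm]

end SwapFactorizations

theorem not_adj_of_cliqueFree_three {V : Type*} {G : SimpleGraph V} {a b c : V}
    (hG : G.CliqueFree 3) (hab : G.Adj a b) (hac : G.Adj a c) : ¬ G.Adj b c := by
  classical
  exact fun hbc => hG {a, b, c} (SimpleGraph.is3Clique_triple_iff.2 ⟨hab, hac, hbc⟩)

section DoubleEdgeSwaps

variable {V : Type*} [Fintype V] [DecidableEq V] {G : SimpleGraph V} {X : Finset V} {g h : Perm V}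

/-- `g` is the product of two disjoint edges of `G` inside `X`. -/
structure IsDoubleEdgeSwap (G : SimpleGraph V) (X : Finset V) (g : Perm V) : Prop where
  mul_self : g * g = 1
  mem_and_adj : ∀ z, g z ≠ z → z ∈ X ∧ G.Adj z (g z)
  card_support : #g.support = 4

/-- Three subsets of size 4 of a set of size at most 5 share a point `a`; if `g`, `h`, `g * h` are
commuting involutions moving `a` along edges, then `a`, `g a`, `h (g a)` is a triangle. -/
theorem IsDoubleEdgeSwap.not_isDoubleEdgeSwap_mul (hG : G.CliqueFree 3) (hX : #X ≤ 5)
    (hg : IsDoubleEdgeSwap G X g) (hh : IsDoubleEdgeSwap G X h) :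
    ¬ IsDoubleEdgeSwap G X (g * h) := by
  intro hgh
  have support_subset : ∀ {g}, IsDoubleEdgeSwap G X g → g.support ⊆ X :=
    fun hg z hz => (hg.mem_and_adj z (Perm.mem_support.1 hz)).1
  have hgh_inter := card_union_add_card_inter g.support h.support
  have hinter := card_union_add_card_inter (g.support ∩ h.support) (g * h).support
  have hle := card_le_card (union_subset (support_subset hg) (support_subset hh))
  have hle' := card_le_card
    (union_subset (inter_subset_left (s₂ := h.support).trans (support_subset hg))
      (support_subset hgh))
  rw [hg.card_support, hh.card_support] at hgh_inter
  rw [hgh.card_support] at hinter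
  obtain ⟨a, ha⟩ : (g.support ∩ h.support ∩ (g * h).support).Nonempty :=
    card_pos.1 (by omega)
  simp only [mem_inter, Perm.mem_support] at ha
  obtain ⟨⟨hga, hha⟩, hgha⟩ := ha
  have hcomm : g * h = h * g := by
    have hinv := inv_eq_of_mul_eq_one_left hgh.mul_self
    rwa [mul_inv_rev, inv_eq_of_mul_eq_one_left hg.mul_self,
      inv_eq_of_mul_eq_one_left hh.mul_self, eq_comm] at hinv
  have hhga : h (g a) ≠ g a := by
    rw [← Perm.mul_apply, ← hcomm, Perm.mul_apply]
    exact fun h => hha (g.injective h)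
  have hadj := (hh.mem_and_adj _ hhga).2
  rw [← Perm.mul_apply, ← hcomm] at hadj
  exact not_adj_of_cliqueFree_three hG (hg.mem_and_adj a hga).2 (hgh.mem_and_adj a hgha).2 hadj

end DoubleEdgeSwaps

section CommonNeighbors

variable {V : Type*} [Fintype V] [DecidableEq V] {G : SimpleGraph V} [DecidableRel G.Adj]
  {X : Finset V} {r r' s s' t x y z w : Perm V} {a : V}

theorem isSwap_of_mem_edgeSwaps (ht : t ∈ edgeSwaps G X) : t.IsSwap := by
  obtain ⟨a, -, b, -, hab, rfl⟩ := mem_edgeSwaps.1 ht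
  exact ⟨a, b, hab.ne, rfl⟩

theorem mem_and_adj_apply_of_mem_edgeSwaps (ht : t ∈ edgeSwaps G X) (ha : t a ≠ a) :
    a ∈ X ∧ G.Adj a (t a) := by
  obtain ⟨b, hb, c, hc, hbc, rfl⟩ := mem_edgeSwaps.1 ht
  rcases eq_or_ne a b with rfl | hab
  · rw [swap_apply_left]; exact ⟨hb, hbc⟩
  rcases eq_or_ne a c with rfl | hac
  · rw [swap_apply_right]; exact ⟨hc, hbc.symm⟩
  exact absurd (swap_apply_of_ne_of_ne hab hac) ha

theorem eq_swap_of_mem_edgeSwaps (ht : t ∈ edgeSwaps G X) (ha : t a ≠ a) :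
    t = swap a (t a) := by
  obtain ⟨b, -, c, -, -, rfl⟩ := mem_edgeSwaps.1 ht
  exact swap_eq_swap_of_apply_eq ha.symm rfl

/-- A product of two adjacent edges is a 3-cycle, all of whose other factorizations into
transpositions use the edge missing from the triangle. -/
theorem disjoint_of_mul_eq_mul (hG : G.CliqueFree 3) (hr : r ∈ edgeSwaps G X)
    (hr' : r' ∈ edgeSwaps G X) (hs : s ∈ edgeSwaps G X) (hs' : s' ∈ edgeSwaps G X)
    (h : r * r' = s * s') (hrr' : r ≠ r') (hrs : r ≠ s) : r.Disjoint r' := by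
  by_contra hdisj
  obtain ⟨a, hra, hr'a⟩ : ∃ a, r a ≠ a ∧ r' a ≠ a := by
    simpa [Perm.Disjoint] using hdisj
  have hab := (mem_and_adj_apply_of_mem_edgeSwaps hr hra).2
  have had := (mem_and_adj_apply_of_mem_edgeSwaps hr' hr'a).2
  have hbd : ¬ G.Adj (r a) (r' a) := not_adj_of_cliqueFree_three hG hab had
  have hr_eq := eq_swap_of_mem_edgeSwaps hr hra
  have hr'_eq := eq_swap_of_mem_edgeSwaps hr' hr'a
  generalize r a = b at *
  generalize r' a = d at *
  subst hr_eq hr'_eq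
  have hne : b ≠ d := fun hbd => hrr' (by rw [hbd])
  have swap_bd_notMem : swap d b ∉ edgeSwaps G X := fun hmem => by
    have := (mem_and_adj_apply_of_mem_edgeSwaps (a := d) hmem (by simpa using hne)).2
    rw [swap_apply_left] at this
    exact hbd this.symm
  obtain ⟨e, f, hef, rfl⟩ := isSwap_of_mem_edgeSwaps hs
  obtain ⟨p, q, -, rfl⟩ := isSwap_of_mem_edgeSwaps hs'
  rcases swap_eq_of_eq_swap_mul_swap hne hef h with hs_eq | hs_eq | hs_eq
  · exact hrs hs_eq.symm
  · have hs'_eq : swap p q = swap d b := calc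
      swap p q = swap a d * swap a b * swap a d := by
        rw [mul_assoc, h, ← hs_eq, swap_mul_self_mul]
      _ = swap d b := by
        rw [mul_swap_eq_swap_mul _ a b, swap_apply_left, swap_apply_of_ne_of_ne hab.ne.symm hne,
          mul_assoc, swap_mul_self, mul_one]
    exact swap_bd_notMem (hs'_eq ▸ hs')
  · exact swap_bd_notMem (swap_comm b d ▸ hs_eq ▸ hs)

/-- Two distinct common neighbours `z`, `w` of `x` and `y` form a four-cycle `x z y w` in which
opposite edges carry the same transposition. -/
theorem disjoint_and_inv_mul_eq_of_mem_inter (hG : G.CliqueFree 3) (hxy : x ≠ y) (hzw : z ≠ w)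
    (hz : z ∈ neighbors G X x ∩ neighbors G X y) (hw : w ∈ neighbors G X x ∩ neighbors G X y) :
    (x⁻¹ * z).Disjoint (z⁻¹ * y) ∧ x⁻¹ * w = z⁻¹ * y := by
  rw [mem_inter, mem_neighbors_comm (x := y), mem_neighbors, mem_neighbors] at hz hw
  have heq : (x⁻¹ * z) * (z⁻¹ * y) = (x⁻¹ * w) * (w⁻¹ * y) := by group
  have hne : x⁻¹ * z ≠ z⁻¹ * y := fun h => hxy <| by
    have := mul_self_of_mem_edgeSwaps hz.1
    nth_rw 2 [h] at this
    simpa [inv_mul_eq_one] using this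
  have hzw' : x⁻¹ * z ≠ x⁻¹ * w := fun h => hzw (mul_left_cancel h)
  have hdisj := disjoint_of_mul_eq_mul hG hz.1 hz.2 hw.1 hw.2 heq hne hzw'
  refine ⟨hdisj, ?_⟩
  obtain ⟨e, f, hef, hs⟩ := isSwap_of_mem_edgeSwaps hw.1
  obtain ⟨p, q, -, hs'⟩ := isSwap_of_mem_edgeSwaps hw.2
  rw [hs, hs'] at heq
  have := swap_eq_or_eq_of_disjoint (isSwap_of_mem_edgeSwaps hz.1) (isSwap_of_mem_edgeSwaps hz.2)
    hdisj hef heq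
  rw [← hs] at this
  exact this.resolve_left hzw'.symm

theorem card_inter_neighbors_le_two (hG : G.CliqueFree 3) (hxy : x ≠ y) :
    #(neighbors G X x ∩ neighbors G X y) ≤ 2 := by
  by_contra! hcon
  obtain ⟨z, w, u, hz, hw, hu, hzw, hzu, hwu⟩ := two_lt_card_iff.1 hcon
  have hw' := (disjoint_and_inv_mul_eq_of_mem_inter hG hxy hzw hz hw).2
  have hu' := (disjoint_and_inv_mul_eq_of_mem_inter hG hxy hzu hz hu).2
  exact hwu (mul_left_cancel (hw'.trans hu'.symm))

theorem isDoubleEdgeSwap_mul (hr : r ∈ edgeSwaps G X) (hs : s ∈ edgeSwaps G X)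
    (hdisj : r.Disjoint s) : IsDoubleEdgeSwap G X (r * s) where
  mul_self := by
    rw [hdisj.commute.symm.mul_mul_mul_comm, mul_self_of_mem_edgeSwaps hr,
      mul_self_of_mem_edgeSwaps hs, one_mul]
  mem_and_adj z hz := by
    rcases hdisj z with hfix | hfix
    · rw [hdisj.commute.eq, Perm.mul_apply, hfix] at hz ⊢
      exact mem_and_adj_apply_of_mem_edgeSwaps hs hz
    · rw [Perm.mul_apply, hfix] at hz ⊢
      exact mem_and_adj_apply_of_mem_edgeSwaps hr hz
  card_support := by
    rw [hdisj.card_support_mul, Perm.card_support_eq_two.2 (isSwap_of_mem_edgeSwaps hr),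
      Perm.card_support_eq_two.2 (isSwap_of_mem_edgeSwaps hs)]

theorem isDoubleEdgeSwap_inv_mul (hG : G.CliqueFree 3) (hxy : x ≠ y)
    (h : 2 ≤ #(neighbors G X x ∩ neighbors G X y)) : IsDoubleEdgeSwap G X (x⁻¹ * y) := by
  obtain ⟨z, w, hz, hw, hzw⟩ := one_lt_card_iff.1 h
  have hdisj := (disjoint_and_inv_mul_eq_of_mem_inter hG hxy hzw hz hw).1
  rw [mem_inter, mem_neighbors_comm (x := y), mem_neighbors, mem_neighbors] at hz
  simpa using isDoubleEdgeSwap_mul hz.1 hz.2 hdisj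

end CommonNeighbors

section HasTwoNeighbors

variable {V : Type*} {G : SimpleGraph V} {X : Finset V} {i i' k : V}

/-- `k` is a vertex outside `X` with two neighbours `i` and `i'` in `X`. -/
structure HasTwoNeighbors (G : SimpleGraph V) (X : Finset V) (k i i' : V) : Prop where
  notMem : k ∉ X
  mem_left : i ∈ X
  mem_right : i' ∈ X
  ne : i ≠ i'
  adj_left : G.Adj k i
  adj_right : G.Adj k i'

namespace HasTwoNeighbors

theorem symm (h : HasTwoNeighbors G X k i i') : HasTwoNeighbors G X k i' i :=
  ⟨h.notMem, h.mem_right, h.mem_left, h.ne.symm, h.adj_right, h.adj_left⟩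

theorem not_adj (h : HasTwoNeighbors G X k i i') (hG : G.CliqueFree 3) : ¬ G.Adj i i' :=
  not_adj_of_cliqueFree_three hG h.adj_left h.adj_right

end HasTwoNeighbors

variable [DecidableEq V] {u v : V} {x y : Perm V}

/-- A neighbour of `x` whose value at `k` is neither `x k` nor `v`. -/
def exitNeighbor (k i i' v : V) (x : Perm V) : Perm V :=
  if x i = v then x * swap k i' else x * swap k i

namespace HasTwoNeighbors

theorem mul_swap_apply (h : HasTwoNeighbors G X k i i') (r : Perm V) :
    (r * swap k i) k = r i ∧ (r * swap k i) i = r k ∧ (r * swap k i) i' = r i' := by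
  simp [swap_apply_of_ne_of_ne h.adj_right.ne.symm h.ne.symm]

theorem mul_swap_apply_right (h : HasTwoNeighbors G X k i i') (r : Perm V) :
    (r * swap k i') k = r i' ∧ (r * swap k i') i = r i ∧ (r * swap k i') i' = r k := by
  have := h.symm.mul_swap_apply r
  tauto

theorem apply_eq_of_mul_swap_eq (h : HasTwoNeighbors G X k i i')
    (hyx : y * swap k i = x * swap k i') : y i = x i' ∧ y k = x i ∧ y i' = x k := by
  have hy := h.mul_swap_apply y
  have hx := h.mul_swap_apply_right x
  rw [hyx] at hy
  grind

theorem exitNeighbor_apply_ne (h : HasTwoNeighbors G X k i i') (v : V) (x : Perm V) :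
    exitNeighbor k i i' v x k ≠ x k ∧ exitNeighbor k i i' v x k ≠ v := by
  rw [exitNeighbor]
  split_ifs with hxi
  · rw [(h.mul_swap_apply_right x).1, ← hxi]
    exact ⟨x.injective.ne h.adj_right.ne.symm, x.injective.ne h.ne.symm⟩
  · rw [(h.mul_swap_apply x).1]
    exact ⟨x.injective.ne h.adj_left.ne.symm, hxi⟩

theorem exitNeighbor_injOn (h : HasTwoNeighbors G X k i i') (huv : u ≠ v) :
    Set.InjOn (exitNeighbor k i i' v) {x | x k = u} := by
  intro x (hx : x k = u) y (hy : y k = u) hxy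
  simp only [exitNeighbor] at hxy
  split_ifs at hxy with hxi hyi hyi
  · exact mul_right_cancel hxy
  · have := (h.apply_eq_of_mul_swap_eq hxy.symm).2.1
    exact absurd (hy.symm.trans (this.trans hxi)) huv
  · have := (h.apply_eq_of_mul_swap_eq hxy).2.1
    exact absurd (hx.symm.trans (this.trans hyi)) huv
  · exact mul_right_cancel hxy

theorem card_image_exitNeighbor_fiber [Fintype V] (h : HasTwoNeighbors G X k i i')
    (huv : u ≠ v) (R : Finset (Perm V)) :
    #((fiber R k u).image (exitNeighbor k i i' v)) = #(fiber R k u) :=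
  card_image_of_injOn ((h.exitNeighbor_injOn huv).mono fun _ hx => (mem_fiber.1 hx).2)

end HasTwoNeighbors

end HasTwoNeighbors

section CrossNeighbors

variable {V : Type*} [Fintype V] [DecidableEq V] (G : SimpleGraph V) [DecidableRel G.Adj]

/-- `R` together with all neighbours of its elements. -/
def closedNeighborhood (X : Finset V) (R : Finset (Perm V)) : Finset (Perm V) :=
  R ∪ jointNeighbors G X R

/-- The outer neighbours of `R` reached through an edge at `k` but not through an edge inside
`X`. -/
def crossNeighbors (X : Finset V) (k : V) (R : Finset (Perm V)) : Finset (Perm V) :=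
  jointNeighbors G (insert k X) R \ closedNeighborhood G X R

variable {G} {X : Finset V} {R : Finset (Perm V)} {t x y z p q r : Perm V} {i i' k u v : V}
  {d : ℕ}

theorem mem_closedNeighborhood :
    z ∈ closedNeighborhood G X R ↔ ∃ q ∈ R, z = q ∨ z ∈ neighbors G X q := by
  simp only [closedNeighborhood, mem_union, mem_jointNeighbors, and_or_left, exists_or,
    exists_eq_right']

theorem exists_apply_eq_of_mem_closedNeighborhood (hk : k ∉ X)
    (hz : z ∈ closedNeighborhood G X R) : ∃ q ∈ R, z k = q k := by
  obtain ⟨q, hq, rfl | hzq⟩ := mem_closedNeighborhood.1 hz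
  · exact ⟨z, hq, rfl⟩
  · exact ⟨q, hq, apply_eq_of_mem_neighbors hzq hk⟩

theorem mul_mem_crossNeighbors (hr : r ∈ R) (ht : t ∈ edgeSwaps G (insert k X))
    (hrt : r * t ∉ closedNeighborhood G X R) : r * t ∈ crossNeighbors G X k R :=
  mem_sdiff.2 ⟨mem_jointNeighbors.2 ⟨r, hr, mul_mem_neighbors ht⟩, hrt⟩

theorem card_outerNeighbors_insert (X : Finset V) (k : V) (R : Finset (Perm V)) :
    #(outerNeighbors G (insert k X) R) = #(outerNeighbors G X R) + #(crossNeighbors G X k R) := by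
  have hmono := outerNeighbors_mono (G := G) (subset_insert k X) R
  have hcross : crossNeighbors G X k R =
      outerNeighbors G (insert k X) R \ outerNeighbors G X R := by
    ext z
    simp only [crossNeighbors, closedNeighborhood, outerNeighbors, mem_sdiff, mem_union]
    tauto
  rw [hcross, add_comm, card_sdiff_add_card_eq_card hmono]

theorem apply_ne_apply_of_not_adj (hii' : i ≠ i') (hadj : ¬ G.Adj i i')
    (h : p = q ∨ p ∈ neighbors G X q) : p i ≠ q i' := by
  rcases h with rfl | h
  · exact p.injective.ne hii'
  obtain ⟨t, ht, rfl⟩ := mem_image.1 h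
  rw [Perm.mul_apply]
  refine q.injective.ne fun hti => hadj ?_
  rw [← hti]
  exact (mem_and_adj_apply_of_mem_edgeSwaps ht (hti ▸ hii'.symm)).2

namespace HasTwoNeighbors

theorem swap_mem_edgeSwaps (h : HasTwoNeighbors G X k i i') :
    swap k i ∈ edgeSwaps G (insert k X) :=
  TranspositionCayley.swap_mem_edgeSwaps (mem_insert_self _ _) (mem_insert_of_mem h.mem_left)
    h.adj_left

theorem mul_swap_mem_crossNeighbors (h : HasTwoNeighbors G X k i i') (hr : r ∈ R)
    (hvalue : ∀ q ∈ R, r i ≠ q k) : r * swap k i ∈ crossNeighbors G X k R := by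
  refine mul_mem_crossNeighbors hr h.swap_mem_edgeSwaps fun hmem => ?_
  obtain ⟨q, hq, hqk⟩ := exists_apply_eq_of_mem_closedNeighborhood h.notMem hmem
  exact hvalue q hq (by rw [← hqk, (h.mul_swap_apply r).1])

theorem two_mul_card_le_card_crossNeighbors (h : HasTwoNeighbors G X k i i')
    (hR : ∀ r ∈ R, r k = u) : 2 * #R ≤ #(crossNeighbors G X k R) := by
  have hsub : ∀ {j j'}, HasTwoNeighbors G X k j j' →
      R.image (· * swap k j) ⊆ crossNeighbors G X k R := by
    intro j j' h z hz
    obtain ⟨r, hr, rfl⟩ := mem_image.1 hz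
    refine h.mul_swap_mem_crossNeighbors hr fun q hq => ?_
    rw [hR q hq, ← hR r hr]
    exact r.injective.ne h.adj_left.ne.symm
  have hdisj : Disjoint (R.image (· * swap k i)) (R.image (· * swap k i')) := by
    rw [disjoint_left]
    intro z hz hz'
    obtain ⟨r, hr, rfl⟩ := mem_image.1 hz
    obtain ⟨r', hr', heq⟩ := mem_image.1 hz'
    have hki := (h.apply_eq_of_mul_swap_eq heq.symm).2.1
    rw [hR r hr, ← hR r' hr'] at hki
    exact h.adj_left.ne (r'.injective hki)
  calc 2 * #R = #(R.image (· * swap k i)) + #(R.image (· * swap k i')) := by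
        rw [card_image_of_injective _ (mul_left_injective _),
          card_image_of_injective _ (mul_left_injective _), two_mul]
    _ ≤ #(crossNeighbors G X k R) := by
        rw [← card_union_of_disjoint hdisj]
        exact card_le_card (union_subset (hsub h) (hsub h.symm))

end HasTwoNeighbors

/-- The arithmetic common to all cases in which `R` meets several fibres. -/
theorem le_card_outerNeighbors_insert (hL : LocalExpansion G X d) (hk : k ∉ X)
    (h : 4 * #R + 2 + ∑ j ∈ values R k, #(fiber R k j) ^ 2 ≤
      2 * #(crossNeighbors G X k R) + #R ^ 2 + 2 * #(values R k)) :
    2 * #R * (d + 2) + 2 ≤ 2 * #(outerNeighbors G (insert k X) R) + #R * (#R + 1) := by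
  have hfibers := hL.sum_fibers hk R
  rw [card_outerNeighbors_insert]
  zify at h hfibers ⊢
  linarith

namespace HasTwoNeighbors

theorem exitNeighbor_mem_crossNeighbors (h : HasTwoNeighbors G X k i i') (hx : x ∈ R)
    (hR : ∀ r ∈ R, r k = x k ∨ r k = v) : exitNeighbor k i i' v x ∈ crossNeighbors G X k R := by
  have hvalue : ∀ q ∈ R, exitNeighbor k i i' v x k ≠ q k := by
    intro q hq
    have := h.exitNeighbor_apply_ne v x
    rcases hR q hq with hqk | hqk <;> rw [hqk]
    exacts [this.1, this.2]
  rw [exitNeighbor] at hvalue ⊢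
  split_ifs at hvalue ⊢
  · rw [(h.mul_swap_apply_right x).1] at hvalue
    exact h.symm.mul_swap_mem_crossNeighbors hx hvalue
  · rw [(h.mul_swap_apply x).1] at hvalue
    exact h.mul_swap_mem_crossNeighbors hx hvalue

theorem image_exitNeighbor_fiber_subset (h : HasTwoNeighbors G X k i i')
    (hR : ∀ r ∈ R, r k = u ∨ r k = v) :
    (fiber R k u).image (exitNeighbor k i i' v) ⊆ crossNeighbors G X k R := by
  intro z hz
  obtain ⟨x, hx, rfl⟩ := mem_image.1 hz
  obtain ⟨hxR, rfl⟩ := mem_fiber.1 hx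
  exact h.exitNeighbor_mem_crossNeighbors hxR hR

/-- If there are as few cross neighbours as `fiber R k u` forces, then an exit from the other
fibre coincides with an exit from this one, and every cross neighbour leaves both fibres. -/
theorem exists_mul_swap_eq (h : HasTwoNeighbors G X k i i') (huv : u ≠ v)
    (hR : ∀ r ∈ R, r k = u ∨ r k = v) (hv : v ∈ values R k)
    (hcard : #(crossNeighbors G X k R) ≤ #(fiber R k u)) :
    (∀ z ∈ crossNeighbors G X k R, z k ≠ u ∧ z k ≠ v) ∧
      ∃ x ∈ fiber R k u, ∃ y ∈ fiber R k v, ∃ j j', HasTwoNeighbors G X k j j' ∧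
        y * swap k j = x * swap k j' := by
  have himage := eq_of_subset_of_card_le (h.image_exitNeighbor_fiber_subset hR)
    ((h.card_image_exitNeighbor_fiber huv R).symm ▸ hcard)
  obtain ⟨y, hyR, hyv⟩ := mem_values.1 hv
  have hy := h.exitNeighbor_mem_crossNeighbors hyR (v := u) fun r hr => hyv ▸ (hR r hr).symm
  rw [← himage] at hy ⊢
  constructor
  · intro z hz
    obtain ⟨x, hx, rfl⟩ := mem_image.1 hz
    obtain ⟨-, rfl⟩ := mem_fiber.1 hx
    exact h.exitNeighbor_apply_ne v x
  obtain ⟨x, hx, hxy⟩ := mem_image.1 hy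
  have hne : x ≠ y := fun hxy => huv (by rw [← (mem_fiber.1 hx).2, hxy, hyv])
  refine ⟨x, hx, y, mem_fiber.2 ⟨hyR, hyv⟩, ?_⟩
  simp only [exitNeighbor] at hxy
  split_ifs at hxy
  · exact absurd (mul_right_cancel hxy) hne
  · exact ⟨i, i', h, hxy.symm⟩
  · exact ⟨i', i, h.symm, hxy.symm⟩
  · exact absurd (mul_right_cancel hxy) hne

theorem exists_mem_fiber_of_forall_crossNeighbors_ne (hk : k ∉ X)
    (hu : ∀ z ∈ crossNeighbors G X k R, z k ≠ u) (hr : r ∈ R)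
    (ht : t ∈ edgeSwaps G (insert k X)) (hrt : (r * t) k = u) :
    ∃ q ∈ fiber R k u, r * t = q ∨ r * t ∈ neighbors G X q := by
  have hmem : r * t ∈ closedNeighborhood G X R := by
    by_contra hmem
    exact hu _ (mul_mem_crossNeighbors hr ht hmem) hrt
  obtain ⟨q, hq, hrtq⟩ := mem_closedNeighborhood.1 hmem
  refine ⟨q, mem_fiber.2 ⟨hq, ?_⟩, hrtq⟩
  rcases hrtq with rfl | hrtq
  · exact hrt
  · rw [← apply_eq_of_mem_neighbors hrtq hk, hrt]

theorem card_fiber_ne_one (h : HasTwoNeighbors G X k i i') (hG : G.CliqueFree 3)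
    (hv : ∀ z ∈ crossNeighbors G X k R, z k ≠ v) (hx : x ∈ R) (hy : y ∈ fiber R k v)
    (hyx : y * swap k i = x * swap k i') : #(fiber R k v) ≠ 1 := by
  intro hone
  obtain ⟨-, hyk, hyi'⟩ := h.apply_eq_of_mul_swap_eq hyx
  obtain ⟨hxk, hxi, -⟩ := h.mul_swap_apply x
  obtain ⟨q, hq, hxq⟩ := exists_mem_fiber_of_forall_crossNeighbors_ne h.notMem hv hx
    h.swap_mem_edgeSwaps (by rw [hxk, ← hyk, (mem_fiber.1 hy).2])
  obtain rfl : q = y := card_le_one.1 hone.le q hq y hy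
  exact apply_ne_apply_of_not_adj h.ne (h.not_adj hG) hxq (by rw [hxi, hyi'])

theorem exists_mem_fiber_neighbors_mul_swap (h : HasTwoNeighbors G X k i i')
    (hG : G.CliqueFree 3) (hu : ∀ z ∈ crossNeighbors G X k R, z k ≠ u) (hx : x k = u)
    (hy : y ∈ R) (hyx : y * swap k i = x * swap k i') :
    ∃ r ∈ fiber R k u, r ≠ x ∧ (x * swap i i' = r ∨ x * swap i i' ∈ neighbors G X r) := by
  obtain ⟨hyi, -, hyi'⟩ := h.apply_eq_of_mul_swap_eq hyx
  obtain ⟨hyk, hyi₂, -⟩ := h.mul_swap_apply_right y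
  obtain ⟨r, hr, hyr⟩ := exists_mem_fiber_of_forall_crossNeighbors_ne h.notMem hu hy
    h.symm.swap_mem_edgeSwaps (by rw [hyk, hyi', hx])
  have hy_eq : y * swap k i' = x * swap i i' := by
    rw [swap_comm i i', ← swap_mul_swap_mul_swap h.adj_left.ne.symm h.ne, swap_comm i k,
      ← mul_assoc, ← mul_assoc, ← hyx, mul_assoc y, swap_mul_self, mul_one]
  refine ⟨r, hr, ?_, hy_eq ▸ hyr⟩
  rintro rfl
  exact apply_ne_apply_of_not_adj h.ne (h.not_adj hG) hyr (by rw [hyi₂, hyi])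

end HasTwoNeighbors

theorem LocalExpansion.le_card_edgeSwaps (hL : LocalExpansion G X d) : d ≤ #(edgeSwaps G X) := by
  have hone := hL {1} (singleton_nonempty 1)
  have hsub : outerNeighbors G X {1} ⊆ neighbors G X 1 := by
    simp [outerNeighbors, jointNeighbors, sdiff_subset]
  have := card_le_card hsub
  rw [card_neighbors] at this
  rw [card_singleton] at hone
  omega

theorem swap_notMem_edgeSwaps_of_not_adj (hii' : i ≠ i') (hadj : ¬ G.Adj i i') :
    swap i i' ∉ edgeSwaps G X := fun hmem => by
  have := (mem_and_adj_apply_of_mem_edgeSwaps (a := i) hmem (by simpa using hii'.symm)).2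
  rw [swap_apply_left] at this
  exact hadj this

theorem notMem_neighbors_of_mul_swap (hii' : i ≠ i') (hadj : ¬ G.Adj i i')
    (hxr : x * swap i i' = r ∨ x * swap i i' ∈ neighbors G X r) : r ∉ neighbors G X x := by
  intro hr
  rcases hxr with rfl | hxr
  · rw [mem_neighbors, inv_mul_cancel_left] at hr
    exact swap_notMem_edgeSwaps_of_not_adj hii' hadj hr
  · have := sign_of_mem_neighbors hxr
    rw [sign_of_mem_neighbors hr, Perm.sign_mul, Perm.sign_swap hii', neg_neg, mul_neg_one] at this
    exact Int.units_ne_iff_eq_neg.2 this.symm rfl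

/-- Two common neighbours would put `swap i i'` among the generators. -/
theorem card_inter_neighbors_le_one_of_mul_swap (hG : G.CliqueFree 3) (hii' : i ≠ i')
    (hadj : ¬ G.Adj i i') (hxr : x ≠ r)
    (h : x * swap i i' = r ∨ x * swap i i' ∈ neighbors G X r) :
    #(neighbors G X x ∩ neighbors G X r) ≤ 1 := by
  by_contra! hcon
  obtain ⟨z, w, hz, hw, hzw⟩ := one_lt_card_iff.1 hcon
  have hdisj := (disjoint_and_inv_mul_eq_of_mem_inter hG hxr hzw hz hw).1
  rw [mem_inter, mem_neighbors_comm (x := r), mem_neighbors, mem_neighbors] at hz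
  obtain ⟨e, f, heq⟩ : ∃ e f, (x⁻¹ * z) * (z⁻¹ * r) = swap i i' * swap e f := by
    rcases h with rfl | h
    · exact ⟨i, i, by rw [swap_self, ← Perm.one_def]; group⟩
    · rw [mem_neighbors_comm, mem_neighbors] at h
      obtain ⟨e, f, -, hef⟩ := isSwap_of_mem_edgeSwaps h
      exact ⟨e, f, by rw [← hef]; group⟩
  have hnot := swap_notMem_edgeSwaps_of_not_adj (X := X) hii' hadj
  rcases swap_eq_or_eq_of_disjoint (isSwap_of_mem_edgeSwaps hz.1) (isSwap_of_mem_edgeSwaps hz.2)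
    hdisj hii' heq with hs | hs
  · exact hnot (hs ▸ hz.1)
  · exact hnot (hs ▸ hz.2)

theorem two_mul_le_card_outerNeighbors_pair (hr : r ∉ neighbors G X x)
    (hxr : #(neighbors G X x ∩ neighbors G X r) ≤ 1) :
    2 * #(edgeSwaps G X) ≤ #(outerNeighbors G X {x, r}) + 1 := by
  have hself : ∀ y, y ∉ neighbors G X y := fun y hy =>
    Int.units_ne_iff_eq_neg.2 (sign_of_mem_neighbors hy) rfl
  have hsub : neighbors G X x ∪ neighbors G X r ⊆ outerNeighbors G X {x, r} := by
    intro z hz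
    rw [mem_outerNeighbors]
    refine ⟨by simpa using hz, ?_⟩
    rw [mem_insert, mem_singleton]
    rw [mem_union] at hz
    rintro (rfl | rfl)
    · exact hz.elim (hself z) (fun h => hr (mem_neighbors_comm.1 h))
    · exact hz.elim hr (hself z)
  have hunion := card_union_add_card_inter (neighbors G X x) (neighbors G X r)
  rw [card_neighbors, card_neighbors] at hunion
  have := card_le_card hsub
  omega

namespace HasTwoNeighbors

theorem exists_pair_le_card_outerNeighbors (h : HasTwoNeighbors G X k i i') (hG : G.CliqueFree 3)
    (hL : LocalExpansion G X d) (hu : ∀ z ∈ crossNeighbors G X k R, z k ≠ u)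
    (hx : x ∈ fiber R k u) (hy : y ∈ R) (hyx : y * swap k i = x * swap k i') :
    ∃ r ∈ fiber R k u, r ≠ x ∧ 2 * d ≤ #(outerNeighbors G X {x, r}) + 1 := by
  obtain ⟨r, hr, hrx, hxr⟩ :=
    h.exists_mem_fiber_neighbors_mul_swap hG hu (mem_fiber.1 hx).2 hy hyx
  have hnot := notMem_neighbors_of_mul_swap h.ne (h.not_adj hG) hxr
  have hone := card_inter_neighbors_le_one_of_mul_swap hG h.ne (h.not_adj hG) hrx.symm hxr
  have := two_mul_le_card_outerNeighbors_pair hnot hone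
  have := hL.le_card_edgeSwaps
  exact ⟨r, hr, hrx, by omega⟩

theorem card_outerNeighbors_of_values_eq_pair (h : HasTwoNeighbors G X k i i')
    (hG : G.CliqueFree 3) (hL : LocalExpansion G X d) (huv : u ≠ v) (hR : values R k = {u, v})
    (hle : #(fiber R k v) ≤ #(fiber R k u)) :
    2 * #R * (d + 2) + 2 ≤ 2 * #(outerNeighbors G (insert k X) R) + #R * (#R + 1) := by
  have hmem : ∀ r ∈ R, r k = u ∨ r k = v := fun r hr => by
    simpa [hR] using mem_values.2 ⟨r, hr, Eq.refl (r k)⟩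
  have hv : v ∈ values R k := by simp [hR]
  have hv_pos := card_fiber_pos hv
  have hsum := sum_card_fiber R k
  have hexit := card_le_card (h.image_exitNeighbor_fiber_subset hmem)
  rw [h.card_image_exitNeighbor_fiber huv R] at hexit
  rw [hR, sum_pair huv] at hsum
  by_cases hmany :
      2 * #R ≤ #(crossNeighbors G X k R) + #(fiber R k u) * #(fiber R k v) + 1
  · refine le_card_outerNeighbors_insert hL h.notMem ?_
    rw [hR, sum_pair huv, card_pair huv]
    nlinarith
  have hfew : #(crossNeighbors G X k R) ≤ #(fiber R k u) := by
    rcases hv_pos.eq_or_lt with hv_one | hv_two <;> nlinarith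
  obtain ⟨hcross, x, hx, y, hy, j, j', hj, hyx⟩ := h.exists_mul_swap_eq huv hmem hv hfew
  have hv_ne := hj.card_fiber_ne_one hG (fun z hz => (hcross z hz).2) (mem_fiber.1 hx).1 hy hyx
  have hv_two : 2 ≤ #(fiber R k v) := by omega
  have hu_two : #(fiber R k u) = 2 := by nlinarith
  obtain ⟨r, hr, hrx, hpair⟩ := hj.exists_pair_le_card_outerNeighbors hG hL
    (fun z hz => (hcross z hz).1) hx (mem_fiber.1 hy).1 hyx
  have hxr : {x, r} = fiber R k u := eq_of_subset_of_card_le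
    (insert_subset hx (singleton_subset_iff.2 hr)) (by rw [hu_two, card_pair hrx.symm])
  have hv_outer := hL (fiber R k v) (card_pos.1 hv_pos)
  have houter := sum_card_outerNeighbors_fiber (G := G) h.notMem R
  rw [hR, sum_pair huv, ← hxr] at houter
  have hv_eq : #(fiber R k v) = 2 := by omega
  have hR_four : #R = 4 := by omega
  rw [hv_eq] at hv_outer
  rw [card_outerNeighbors_insert, hR_four]
  omega

theorem exists_apply_eq_of_crossNeighbors_eq_empty (h : HasTwoNeighbors G X k i i')
    (hG : G.CliqueFree 3) (hE : crossNeighbors G X k R = ∅) (hr : r ∈ R) :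
    ∃ q ∈ R, q k = r i ∧ r k ≠ q i' ∧ r i' ≠ q i := by
  obtain ⟨hrk, hri, hri'⟩ := h.mul_swap_apply r
  have hmem : r * swap k i ∈ closedNeighborhood G X R := by
    by_contra hmem
    exact notMem_empty _ (hE ▸ mul_mem_crossNeighbors hr h.swap_mem_edgeSwaps hmem)
  obtain ⟨q, hq, hrq⟩ := mem_closedNeighborhood.1 hmem
  have hadj := h.not_adj hG
  refine ⟨q, hq, ?_, hri ▸ apply_ne_apply_of_not_adj h.ne hadj hrq,
    hri' ▸ apply_ne_apply_of_not_adj h.ne.symm (fun hadj' => hadj hadj'.symm) hrq⟩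
  rw [← hrk]
  rcases hrq with rfl | hrq
  · rfl
  · exact (apply_eq_of_mem_neighbors hrq h.notMem).symm

theorem apply_left_ne_of_crossNeighbors_eq_empty (h : HasTwoNeighbors G X k i i')
    (hG : G.CliqueFree 3) (hE : crossNeighbors G X k R = ∅) (hy : y ∈ R)
    (hR : ∀ r ∈ R, r k = u ∨ r = y ∨ r = z) (huz : u ≠ z k) : y i ≠ u := by
  intro hyi
  have hvalue : ∀ r ∈ R, (r i = u ∨ r i = y k ∨ r i = z k) ∧
      (r i' = u ∨ r i' = y k ∨ r i' = z k) := by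
    intro r hr
    obtain ⟨q, hq, hqr, -⟩ := h.exists_apply_eq_of_crossNeighbors_eq_empty hG hE hr
    obtain ⟨q', hq', hqr', -⟩ := h.symm.exists_apply_eq_of_crossNeighbors_eq_empty hG hE hr
    have := hR q hq
    have := hR q' hq'
    grind
  have hdistinct : ∀ r : Perm V, r k ≠ r i ∧ r k ≠ r i' ∧ r i ≠ r i' := fun r =>
    ⟨r.injective.ne h.adj_left.ne, r.injective.ne h.adj_right.ne, r.injective.ne h.ne⟩
  have hyi' : y i' = z k := by have := hvalue y hy; have := hdistinct y; grind
  obtain ⟨x, hx, hxy⟩ := h.exists_apply_eq_of_crossNeighbors_eq_empty hG hE hy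
  have : x k = u := hxy.1.trans hyi
  have hx_apply : x i = y k ∧ x i' = z k := by
    have := hvalue x hx; have := hdistinct x; grind
  obtain ⟨q, hq, hqy⟩ := h.symm.exists_apply_eq_of_crossNeighbors_eq_empty hG hE hy
  obtain ⟨q', hq', hqx⟩ := h.symm.exists_apply_eq_of_crossNeighbors_eq_empty hG hE hx
  have hyz : y k ≠ z k := by have := hdistinct y; grind
  obtain rfl : q = z := by have := hR q hq; grind
  obtain rfl : q' = q := by have := hR q' hq'; grind
  have := hvalue q' hq
  have := hdistinct q'
  grind

theorem crossNeighbors_nonempty_of_card_fiber_eq_one (h : HasTwoNeighbors G X k i i')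
    (hG : G.CliqueFree 3) {w : V} (huv : u ≠ v) (huw : u ≠ w)
    (hR : ∀ r ∈ R, r k = u ∨ r k = v ∨ r k = w) (hv : #(fiber R k v) = 1)
    (hw : #(fiber R k w) = 1) : 1 ≤ #(crossNeighbors G X k R) := by
  by_contra! hE
  replace hE : crossNeighbors G X k R = ∅ := card_eq_zero.1 (by omega)
  obtain ⟨y, hy⟩ := card_eq_one.1 hv
  obtain ⟨z, hz⟩ := card_eq_one.1 hw
  have hy_mem : ∀ r, r ∈ R ∧ r k = v ↔ r = y := fun r => by rw [← mem_fiber, hy, mem_singleton]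
  have hz_mem : ∀ r, r ∈ R ∧ r k = w ↔ r = z := fun r => by rw [← mem_fiber, hz, mem_singleton]
  obtain ⟨hyR, hyk⟩ := (hy_mem y).2 rfl
  obtain ⟨-, hzk⟩ := (hz_mem z).2 rfl
  have hR' : ∀ r ∈ R, r k = u ∨ r = y ∨ r = z := fun r hr =>
    (hR r hr).imp_right (Or.imp (fun hrv => (hy_mem r).1 ⟨hr, hrv⟩) fun hrw =>
      (hz_mem r).1 ⟨hr, hrw⟩)
  have huz : u ≠ z k := hzk ▸ huw
  have hyi := h.apply_left_ne_of_crossNeighbors_eq_empty hG hE hyR hR' huz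
  have hyi' := h.symm.apply_left_ne_of_crossNeighbors_eq_empty hG hE hyR hR' huz
  obtain ⟨q, hq, hqy, -⟩ := h.exists_apply_eq_of_crossNeighbors_eq_empty hG hE hyR
  obtain ⟨q', hq', hqy', -⟩ := h.symm.exists_apply_eq_of_crossNeighbors_eq_empty hG hE hyR
  have := hR' q hq
  have := hR' q' hq'
  have : u ≠ y k := hyk ▸ huv
  have := y.injective.ne h.ne
  have := y.injective.ne h.adj_left.ne
  have := y.injective.ne h.adj_right.ne
  grind

theorem card_outerNeighbors_of_values_eq_triple (h : HasTwoNeighbors G X k i i')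
    (hG : G.CliqueFree 3) (hL : LocalExpansion G X d) (hthree : #(values R k) = 3) :
    2 * #R * (d + 2) + 2 ≤ 2 * #(outerNeighbors G (insert k X) R) + #R * (#R + 1) := by
  obtain ⟨u, v, w, huv, huw, hvw, hR⟩ := card_eq_three.1 hthree
  have hmem : ∀ r ∈ R, r k = u ∨ r k = v ∨ r k = w := fun r hr => by
    simpa [hR] using mem_values.2 ⟨r, hr, Eq.refl (r k)⟩
  have hsum : ∀ f : V → ℕ, ∑ j ∈ values R k, f j = f u + f v + f w := fun f => by
    rw [hR, sum_insert (by simp [huv, huw]), sum_pair hvw, add_assoc]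
  have hone : ∀ j ∈ values R k, ∃ a, #(fiber R k j) = 1 + a := fun j hj =>
    Nat.exists_eq_add_of_le (card_fiber_pos hj)
  obtain ⟨a, ha⟩ := hone u (by simp [hR])
  obtain ⟨b, hb⟩ := hone v (by simp [hR])
  obtain ⟨c, hc⟩ := hone w (by simp [hR])
  have hcross : 1 ≤ #(crossNeighbors G X k R) + a * b + a * c + b * c := by
    by_contra! hzero
    simp only [Nat.lt_one_iff, add_eq_zero, mul_eq_zero] at hzero
    obtain ⟨⟨⟨hE, hab⟩, hac⟩, hbc⟩ := hzero
    have hsingletons : b = 0 ∧ c = 0 ∨ a = 0 ∧ c = 0 ∨ a = 0 ∧ b = 0 := by tauto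
    rcases hsingletons with ⟨rfl, rfl⟩ | ⟨rfl, rfl⟩ | ⟨rfl, rfl⟩
    · have := h.crossNeighbors_nonempty_of_card_fiber_eq_one hG huv huw hmem hb hc
      omega
    · have := h.crossNeighbors_nonempty_of_card_fiber_eq_one hG huv.symm hvw
        (fun r hr => by have := hmem r hr; tauto) ha hc
      omega
    · have := h.crossNeighbors_nonempty_of_card_fiber_eq_one hG huw.symm hvw.symm
        (fun r hr => by have := hmem r hr; tauto) ha hb
      omega
  have hcard := sum_card_fiber R k
  refine le_card_outerNeighbors_insert hL h.notMem ?_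
  rw [hsum, ha, hb, hc] at hcard ⊢
  rw [hthree, ← hcard]
  nlinarith

end HasTwoNeighbors

theorem HasTwoNeighbors.localExpansion_insert (h : HasTwoNeighbors G X k i i')
    (hG : G.CliqueFree 3) (hL : LocalExpansion G X d) :
    LocalExpansion G (insert k X) (d + 2) := by
  intro R hR
  have hpos : 1 ≤ #(values R k) := card_pos.2 (hR.image _)
  obtain hone | htwo | hthree | hfour : #(values R k) = 1 ∨ #(values R k) = 2 ∨
      #(values R k) = 3 ∨ 4 ≤ #(values R k) := by omega
  · obtain ⟨a, ha⟩ := exists_forall_apply_eq_of_card_values_eq_one hone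
    have := h.two_mul_card_le_card_crossNeighbors ha
    have := hL R hR
    rw [card_outerNeighbors_insert]
    linarith
  · obtain ⟨u, v, huv, huv_eq⟩ := card_eq_two.1 htwo
    rcases le_total #(fiber R k v) #(fiber R k u) with hle | hle
    · exact h.card_outerNeighbors_of_values_eq_pair hG hL huv huv_eq hle
    · exact h.card_outerNeighbors_of_values_eq_pair hG hL huv.symm (pair_comm u v ▸ huv_eq) hle
  · exact h.card_outerNeighbors_of_values_eq_triple hG hL hthree
  · refine le_card_outerNeighbors_insert hL h.notMem ?_
    have hsq := sum_sq_add_mul_le_sq_sum (values R k) (fun j => (#(fiber R k j) : ℤ))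
      fun j hj => by exact_mod_cast card_fiber_pos hj
    have hcard := sum_card_fiber R k
    have hle : #(values R k) ≤ #R := card_image_le
    zify at hcard hle hfour ⊢
    rw [hcard] at hsq
    have hprod := mul_nonneg (sub_nonneg.2 hle) (sub_nonneg.2 hfour)
    clear hcard hL h hG
    nlinarith

theorem UnicyclicOn.localExpansion (h : UnicyclicOn G X) (hG : G.CliqueFree 3) :
    LocalExpansion G X #X := by
  induction h with
  | @close_cycle X k i i' hT hk hi hi' hii' hki hki' _ =>
    have hnbrs : HasTwoNeighbors G X k i i' := ⟨hk, hi, hi', hii', hki, hki'⟩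
    have := hnbrs.localExpansion_insert hG hT.localExpansion
    have hX : 1 ≤ #X := card_pos.2 ⟨i, hi⟩
    rwa [card_insert_of_notMem hk, show #X + 1 = #X - 1 + 2 by omega]
  | insert_leaf _ hk hi hki _ ih =>
    rw [card_insert_of_notMem hk]
    exact ih.insert hk hi hki

end CrossNeighbors

section Counting

theorem sum_card_eq_sum_card_filter_mem {α β : Type*} [DecidableEq β] {S : Finset α}
    {N : α → Finset β} {Q : Finset β} (hQ : ∀ x ∈ S, N x ⊆ Q) :
    ∑ x ∈ S, #(N x) = ∑ z ∈ Q, #{x ∈ S | z ∈ N x} := by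
  refine Eq.trans (sum_congr rfl fun x hx => ?_)
    (sum_card_bipartiteAbove_eq_sum_card_bipartiteBelow fun x z => z ∈ N x)
  rw [bipartiteAbove, filter_mem_eq_inter, inter_eq_right.2 (hQ x hx)]

variable {α β : Type*} [DecidableEq β]

theorem sum_sum_card_inter_eq_sum_sq (S : Finset α) (N : α → Finset β) :
    ∑ x ∈ S, ∑ y ∈ S, #(N x ∩ N y) = ∑ z ∈ S.biUnion N, #{x ∈ S | z ∈ N x} ^ 2 := by
  rw [← sum_product', sum_card_eq_sum_card_filter_mem (Q := S.biUnion N) fun p hp =>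
    inter_subset_left.trans (subset_biUnion_of_mem N (mem_product.1 hp).1)]
  refine sum_congr rfl fun z _ => ?_
  simp_rw [mem_inter]
  rw [sq, ← card_product]
  exact congrArg card (filter_product (z ∈ N ·) (z ∈ N ·))

variable [DecidableEq α]

/-- A Bonferroni inequality: a point lying in `c` of the sets contributes
`(c - a) * (c - a - 1) ≥ 0` to the difference of the two sides. -/
theorem two_mul_sum_card_le_card_biUnion_add (a : ℕ) (S : Finset α) (N : α → Finset β) :
    2 * a * ∑ x ∈ S, #(N x) ≤
      a * (a + 1) * #(S.biUnion N) + ∑ x ∈ S, ∑ y ∈ S.erase x, #(N x ∩ N y) := by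
  have split_diagonal : ∑ x ∈ S, ∑ y ∈ S, #(N x ∩ N y) =
      ∑ x ∈ S, #(N x) + ∑ x ∈ S, ∑ y ∈ S.erase x, #(N x ∩ N y) := by
    rw [← sum_add_distrib]
    refine sum_congr rfl fun x hx => ?_
    rw [← add_sum_erase S _ hx, inter_self]
  have pointwise (c : ℕ) : (2 * a + 1) * c ≤ c ^ 2 + a * (a + 1) := by
    rcases le_or_gt c a with h | h
    · obtain ⟨e, rfl⟩ := Nat.exists_eq_add_of_le h
      nlinarith
    · obtain ⟨e, rfl⟩ := Nat.exists_eq_add_of_lt h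
      nlinarith
  have summed := sum_le_sum fun z (_ : z ∈ S.biUnion N) => pointwise #{x ∈ S | z ∈ N x}
  rw [← mul_sum, sum_add_distrib, sum_const, smul_eq_mul, ← sum_sum_card_inter_eq_sum_sq,
    ← sum_card_eq_sum_card_filter_mem fun x hx => subset_biUnion_of_mem N hx,
    split_diagonal] at summed
  linarith

/-- Mantel's theorem, as a bound on the sum of the degrees inside `S`. -/
theorem sum_card_filter_adj_le {α : Type*} {H : SimpleGraph α} [DecidableRel H.Adj]
    (hH : H.CliqueFree 3) (S : Finset α) :
    ∑ x ∈ S, #{y ∈ S | H.Adj x y} ≤ #S * #S / 2 := by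
  have degree_eq (x : S) : (H.induce (S : Set α)).degree x = #{y ∈ S | H.Adj x y} := by
    rw [← SimpleGraph.card_neighborFinset_eq_degree, ← card_map (Function.Embedding.subtype _)]
    congr 1
    ext y
    simp [and_comm]
  have turan :=
    (hH.comap ⟨(SimpleGraph.Embedding.induce (S : Set α)).toCopy⟩).card_edgeFinset_le
  have card_choose : (#S % 2).choose 2 = 0 := Nat.choose_eq_zero_of_lt (Nat.mod_lt _ two_pos)
  calc ∑ x ∈ S, #{y ∈ S | H.Adj x y}
      = ∑ x : S, (H.induce (S : Set α)).degree x := by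
        rw [← sum_coe_sort S]
        exact sum_congr rfl fun x _ => (degree_eq x).symm
    _ = 2 * #(H.induce (S : Set α)).edgeFinset := SimpleGraph.sum_degrees_eq_twice_card_edges _
    _ ≤ #S * #S / 2 := by
        simp only [coe_sort_coe, Fintype.card_coe, card_choose] at turan
        rw [sq] at turan
        omega

theorem two_mul_sum_card_le_of_cliqueFree_three {α : Type*} {H : SimpleGraph α}
    [DecidableRel H.Adj] (hH : H.CliqueFree 3) {S : Finset α} {N : α → Finset β} (a b : ℕ)
    (hN : ∀ x ∈ S, ∀ y ∈ S, x ≠ y → #(N x ∩ N y) ≤ b + if H.Adj x y then 1 else 0) :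
    2 * a * ∑ x ∈ S, #(N x) ≤
      a * (a + 1) * #(S.biUnion N) + (#S * (#S - 1) * b + #S * #S / 2) := by
  classical
  refine (two_mul_sum_card_le_card_biUnion_add a S N).trans (Nat.add_le_add_left ?_ _)
  calc ∑ x ∈ S, ∑ y ∈ S.erase x, #(N x ∩ N y)
      ≤ ∑ x ∈ S, ((#S - 1) * b + #{y ∈ S | H.Adj x y}) := by
        refine sum_le_sum fun x hx => (sum_le_sum fun y hy =>
          hN x hx y (mem_of_mem_erase hy) (ne_of_mem_erase hy).symm).trans ?_
        rw [sum_add_distrib, sum_const, smul_eq_mul, card_erase_of_mem hx, sum_boole, Nat.cast_id]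
        gcongr
        exact erase_subset x S
    _ ≤ #S * (#S - 1) * b + #S * #S / 2 := by
        rw [sum_add_distrib, sum_const, smul_eq_mul, mul_assoc]
        gcongr
        exact sum_card_filter_adj_le hH S

end Counting

section DiagonalGraph

variable {V : Type*} [Fintype V] [DecidableEq V] (G : SimpleGraph V) [DecidableRel G.Adj]

/-- The graph joining opposite corners of the 4-cycles of the Cayley graph generated by
`edgeSwaps G X`, that is, distinct permutations with two common neighbours. -/
def diagonalGraph (X : Finset V) : SimpleGraph (Perm V) where
  Adj x y := x ≠ y ∧ 2 ≤ #(neighbors G X x ∩ neighbors G X y)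
  symm := ⟨fun x y h => ⟨h.1.symm, by rw [inter_comm]; exact h.2⟩⟩
  loopless := ⟨fun _ h => h.1 rfl⟩

instance (X : Finset V) : DecidableRel (diagonalGraph G X).Adj := fun x y =>
  inferInstanceAs (Decidable (x ≠ y ∧ 2 ≤ #(neighbors G X x ∩ neighbors G X y)))

variable {G} {X : Finset V} {x y : Perm V}

theorem diagonalGraph_cliqueFree_three (hG : G.CliqueFree 3) (hX : #X ≤ 5) :
    (diagonalGraph G X).CliqueFree 3 := by
  intro s hs
  obtain ⟨x, y, z, hxy, hxz, hyz, -⟩ := SimpleGraph.is3Clique_iff.1 hs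
  have hdouble {x y : Perm V} (h : (diagonalGraph G X).Adj x y) : IsDoubleEdgeSwap G X (x⁻¹ * y) :=
    isDoubleEdgeSwap_inv_mul hG h.1 h.2
  refine (hdouble hxy).not_isDoubleEdgeSwap_mul hG hX (hdouble hyz) ?_
  rw [mul_assoc, mul_inv_cancel_left]
  exact hdouble hxz

theorem card_inter_neighbors_le (hG : G.CliqueFree 3) (hxy : x ≠ y) :
    #(neighbors G X x ∩ neighbors G X y) ≤ 1 + if (diagonalGraph G X).Adj x y then 1 else 0 := by
  split_ifs with h
  · exact card_inter_neighbors_le_two hG hxy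
  · by_contra! hcard
    exact h ⟨hxy, hcard⟩

theorem two_mul_card_edgeSwaps_mul_card_le (hG : G.CliqueFree 3) (hX : #X ≤ 5) (a : ℕ)
    (S : Finset (Perm V)) :
    2 * a * (#S * #(edgeSwaps G X)) ≤
      a * (a + 1) * #(jointNeighbors G X S) + (#S * (#S - 1) + #S * #S / 2) := by
  have h := two_mul_sum_card_le_of_cliqueFree_three (diagonalGraph_cliqueFree_three hG hX)
    (S := S) (N := neighbors G X) a 1 fun x _ y _ => card_inter_neighbors_le hG
  simp_rw [card_neighbors, sum_const, smul_eq_mul, mul_one] at h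
  exact h

theorem two_add_two_mul_card_mul_le (hG : G.CliqueFree 3) (hX : #X ≤ 5) {S : Finset (Perm V)}
    {u : Perm V} (hS : (S ∩ neighbors G X u).Nonempty) :
    2 + 2 * (#(S ∩ neighbors G X u) * (#(edgeSwaps G X) - 1)) ≤
      2 * #(jointNeighbors G X S) +
        #(S ∩ neighbors G X u) * #(S ∩ neighbors G X u) / 2 := by
  set L := S ∩ neighbors G X u
  have hu : ∀ x ∈ L, u ∈ neighbors G X x := fun x hx => mem_neighbors_comm.1 (mem_inter.1 hx).2
  have hinter : ∀ x ∈ L, ∀ y ∈ L, x ≠ y → #((neighbors G X x).erase u ∩ (neighbors G X y).erase u)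
      ≤ 0 + if (diagonalGraph G X).Adj x y then 1 else 0 := by
    intro x hx y hy hxy
    rw [erase_inter, inter_erase, erase_idem, card_erase_of_mem (mem_inter.2 ⟨hu x hx, hu y hy⟩)]
    have := card_inter_neighbors_le (X := X) hG hxy
    omega
  have counting := two_mul_sum_card_le_of_cliqueFree_three (diagonalGraph_cliqueFree_three hG hX)
    1 0 hinter
  rw [sum_congr rfl fun x hx => card_erase_of_mem (hu x hx)] at counting
  simp_rw [card_neighbors, sum_const, smul_eq_mul] at counting
  have hsub : insert u (L.biUnion fun x => (neighbors G X x).erase u) ⊆ jointNeighbors G X S := by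
    obtain ⟨x, hx⟩ := hS
    refine insert_subset (mem_jointNeighbors.2 ⟨x, (mem_inter.1 hx).1, hu x hx⟩) ?_
    exact biUnion_subset.2 fun y hy => (erase_subset _ _).trans
      (subset_biUnion_of_mem (neighbors G X) (mem_inter.1 hy).1)
  have hcard := card_le_card hsub
  rw [card_insert_of_notMem (by simp)] at hcard
  omega

end DiagonalGraph

/-! ### Parity classes -/

section ParityClasses

variable {V : Type*} [Fintype V] [DecidableEq V] {G : SimpleGraph V} [DecidableRel G.Adj]
  {X : Finset V} {R : Finset (Perm V)} {e : ℤˣ}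

/-- The elements of `R` of sign `e`. The Cayley graph of the transpositions is bipartite between
the two sign classes. -/
def signClass (R : Finset (Perm V)) (e : ℤˣ) : Finset (Perm V) := {r ∈ R | Perm.sign r = e}

theorem card_signClass_add_card_signClass_neg (R : Finset (Perm V)) (e : ℤˣ) :
    #(signClass R e) + #(signClass R (-e)) = #R := by
  simp_rw [signClass, ← Int.units_ne_iff_eq_neg]
  exact card_filter_add_card_filter_not _

theorem sign_of_mem_jointNeighbors_signClass {z : Perm V}
    (hz : z ∈ jointNeighbors G X (signClass R e)) : Perm.sign z = -e := by
  obtain ⟨x, hx, hzx⟩ := mem_jointNeighbors.1 hz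
  rw [sign_of_mem_neighbors hzx, (mem_filter.1 hx).2]

theorem jointNeighbors_signClass_sdiff_subset_outerNeighbors :
    jointNeighbors G X (signClass R e) \ signClass R (-e) ⊆ outerNeighbors G X R := by
  intro z hz
  obtain ⟨hz, hz'⟩ := mem_sdiff.1 hz
  refine mem_sdiff.2 ⟨biUnion_subset_biUnion_of_subset_left _ (filter_subset _ _) hz, fun hzR => ?_⟩
  exact hz' (mem_filter.2 ⟨hzR, sign_of_mem_jointNeighbors_signClass hz⟩)

theorem card_sdiff_add_card_sdiff_le_card_outerNeighbors :
    #(jointNeighbors G X (signClass R e) \ signClass R (-e)) +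
      #(jointNeighbors G X (signClass R (-e)) \ signClass R e) ≤ #(outerNeighbors G X R) := by
  have hneg := jointNeighbors_signClass_sdiff_subset_outerNeighbors (G := G) (X := X) (R := R)
    (e := -e)
  rw [neg_neg] at hneg
  rw [← card_union_of_disjoint]
  · exact card_le_card
      (union_subset jointNeighbors_signClass_sdiff_subset_outerNeighbors hneg)
  · refine disjoint_left.2 fun z hz hz' => ?_
    have h := sign_of_mem_jointNeighbors_signClass (mem_sdiff.1 hz).1
    have h' := sign_of_mem_jointNeighbors_signClass (mem_sdiff.1 hz').1
    exact Int.units_ne_iff_eq_neg.2 (h.symm.trans h') rfl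

theorem disjoint_jointNeighbors_comm {R₀ R₁ : Finset (Perm V)}
    (h : Disjoint R₀ (jointNeighbors G X R₁)) : Disjoint (jointNeighbors G X R₀) R₁ := by
  refine disjoint_left.2 fun u hu hu₁ => ?_
  obtain ⟨x, hx, hxu⟩ := mem_jointNeighbors.1 hu
  exact disjoint_left.1 h hx (mem_jointNeighbors.2 ⟨u, hu₁, mem_neighbors_comm.1 hxu⟩)

theorem card_jointNeighbors_le (S : Finset (Perm V)) :
    #(jointNeighbors G X S) ≤ #S * #(edgeSwaps G X) :=
  card_biUnion_le_card_mul _ _ _ fun x _ => (card_neighbors x).le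

/-- Numerical constraints on a set with `m₀` elements of one sign, having `q₀` neighbours in a
`d`-regular Cayley graph, and `m₁ ≤ m₀` elements of the other sign, having `q₁` neighbours, of
which `t` are among the `m₀` former elements. The set has `b` outer neighbours. -/
structure ParityProfile (d b m₀ m₁ q₀ q₁ t : ℕ) : Prop where
  le : m₁ ≤ m₀
  le_left : t ≤ m₀
  le_mul : t ≤ m₁ * d
  bonferroni_left (a : ℕ) :
    2 * a * (m₀ * d) ≤ a * (a + 1) * q₀ + (m₀ * (m₀ - 1) + m₀ * m₀ / 2)
  bonferroni_right (a : ℕ) :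
    2 * a * (m₁ * d) ≤ a * (a + 1) * q₁ + (m₁ * (m₁ - 1) + m₁ * m₁ / 2)
  add_le : q₀ + q₁ ≤ b + (m₁ + t)
  add_le_of_eq_zero : t = 0 → q₀ + q₁ ≤ b
  star_le : m₁ = 1 → 0 < t → 2 + 2 * (t * (d - 1)) ≤ 2 * q₀ + t * t / 2

theorem exists_parityProfile (hG : G.CliqueFree 3) (hX : #X ≤ 5) (R : Finset (Perm V)) :
    ∃ m₀ m₁ q₀ q₁ t, m₀ + m₁ = #R ∧
      ParityProfile #(edgeSwaps G X) #(outerNeighbors G X R) m₀ m₁ q₀ q₁ t := by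
  obtain ⟨e, hle⟩ : ∃ e : ℤˣ, #(signClass R (-e)) ≤ #(signClass R e) := by
    rcases le_total #(signClass R (-1)) #(signClass R 1) with h | h
    · exact ⟨1, h⟩
    · exact ⟨-1, by rwa [neg_neg]⟩
  have hcard := card_signClass_add_card_signClass_neg R e
  have hsplit := card_sdiff_add_card_sdiff_le_card_outerNeighbors (G := G) (X := X) (R := R)
    (e := e)
  generalize signClass R e = R₀ at *
  generalize signClass R (-e) = R₁ at *
  have hsdiff := le_card_sdiff R₁ (jointNeighbors G X R₀)
  have hinter := card_sdiff_add_card_inter (jointNeighbors G X R₁) R₀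
  rw [inter_comm] at hinter
  refine ⟨#R₀, #R₁, #(jointNeighbors G X R₀), #(jointNeighbors G X R₁),
    #(R₀ ∩ jointNeighbors G X R₁), hcard, ?_⟩
  exact
    { le := hle
      le_left := card_le_card inter_subset_left
      le_mul := (card_le_card inter_subset_right).trans (card_jointNeighbors_le R₁)
      bonferroni_left a := two_mul_card_edgeSwaps_mul_card_le hG hX a R₀
      bonferroni_right a := two_mul_card_edgeSwaps_mul_card_le hG hX a R₁
      add_le := by omega
      add_le_of_eq_zero := by
        intro ht
        have hdisj := disjoint_iff_inter_eq_empty.2 (card_eq_zero.1 ht)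
        rwa [sdiff_eq_self_of_disjoint (disjoint_jointNeighbors_comm hdisj),
          sdiff_eq_self_of_disjoint hdisj.symm] at hsplit
      star_le := by
        intro hone hpos
        obtain ⟨u, rfl⟩ := card_eq_one.1 hone
        rw [jointNeighbors, singleton_biUnion] at hpos ⊢
        exact two_add_two_mul_card_mul_le hG hX (card_pos.1 hpos) }

namespace ParityProfile

variable {b m₀ m₁ q₀ q₁ t : ℕ}

theorem eight_le (h : ParityProfile 4 b m₀ m₁ q₀ q₁ t) (hlb : 4 ≤ m₀ + m₁) (hub : m₀ + m₁ ≤ 6) :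
    8 ≤ b := by
  obtain ⟨hle, ht, htd, h₀, h₁, hadd, hzero, hstar⟩ := h
  have := h₀ 1
  have := h₀ 2
  have := h₁ 1
  have : m₁ ≤ 3 := by omega
  have : m₀ ≤ 6 := by omega
  interval_cases m₁ <;> interval_cases m₀ <;> first | omega | (interval_cases t <;> omega)

theorem twelve_le (h : ParityProfile 5 b m₀ m₁ q₀ q₁ t) (hlb : 5 ≤ m₀ + m₁) (hub : m₀ + m₁ ≤ 9) :
    12 ≤ b := by
  obtain ⟨hle, ht, htd, h₀, h₁, hadd, hzero, hstar⟩ := h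
  have := h₀ 1
  have := h₀ 2
  have := h₁ 1
  have := h₁ 2
  have : m₁ ≤ 4 := by omega
  have : m₀ ≤ 9 := by omega
  interval_cases m₁ <;> interval_cases m₀ <;> first | omega | (interval_cases t <;> omega)

end ParityProfile

theorem eight_le_card_outerNeighbors (hG : G.CliqueFree 3) (hX : #X ≤ 5)
    (hd : #(edgeSwaps G X) = 4) (hlb : 4 ≤ #R) (hub : #R ≤ 6) : 8 ≤ #(outerNeighbors G X R) := by
  obtain ⟨m₀, m₁, q₀, q₁, t, hcard, h⟩ := exists_parityProfile hG hX R
  rw [← hcard] at hlb hub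
  rw [hd] at h
  exact h.eight_le hlb hub

theorem twelve_le_card_outerNeighbors (hG : G.CliqueFree 3) (hX : #X ≤ 5)
    (hd : #(edgeSwaps G X) = 5) (hlb : 5 ≤ #R) (hub : #R ≤ 9) : 12 ≤ #(outerNeighbors G X R) := by
  obtain ⟨m₀, m₁, q₀, q₁, t, hcard, h⟩ := exists_parityProfile hG hX R
  rw [← hcard] at hlb hub
  rw [hd] at h
  exact h.twelve_le hlb hub

end ParityClasses

section Blocks

variable {V : Type*} [Fintype V] [DecidableEq V] {X : Finset V} {g h : Perm V} {i j k u v : V}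

/-- The coset `g * Sym(X)`: the permutations that agree with `g` outside `X`. -/
def block (X : Finset V) (g : Perm V) : Finset (Perm V) := {h | ∀ v ∉ X, h v = g v}

theorem mem_block : h ∈ block X g ↔ ∀ v ∉ X, h v = g v := by
  simp [block]

theorem card_block (X : Finset V) (g : Perm V) : #(block X g) = (#X).factorial := by
  have htranslate : block X g = (block X 1).image (g * ·) := by
    ext h
    rw [mem_image]
    constructor
    · intro hh
      refine ⟨g⁻¹ * h, mem_block.2 fun v hv => ?_, by simp⟩
      simp [mem_block.1 hh v hv]
    · rintro ⟨p, hp, rfl⟩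
      exact mem_block.2 fun v hv => by simp [mem_block.1 hp v hv]
  have hsym := Fintype.card_congr (Perm.subtypeEquivSubtypePerm (· ∈ X))
  rw [Fintype.card_perm, Fintype.card_coe] at hsym
  rw [htranslate, card_image_of_injective _ (mul_right_injective g), hsym, Fintype.card_subtype]
  rfl

theorem image_eq_of_mem_block (hh : h ∈ block X g) : X.image h = X.image g := by
  refine eq_of_subset_of_card_le (fun j hj => ?_) ?_
  · obtain ⟨v, hv, rfl⟩ := mem_image.1 hj
    by_contra hcon
    have hpre : g⁻¹ (h v) ∉ X := fun hmem => hcon (mem_image.2 ⟨_, hmem, by simp⟩)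
    have heq : h (g⁻¹ (h v)) = h v := (mem_block.1 hh _ hpre).trans (g.apply_symm_apply _)
    rw [h.injective heq] at hpre
    exact hpre hv
  · rw [card_image_of_injective _ g.injective, card_image_of_injective _ h.injective]

theorem apply_mem_image_of_mem_block (hh : h ∈ block X g) (hv : v ∈ X) : h v ∈ X.image g :=
  image_eq_of_mem_block hh ▸ mem_image_of_mem h hv

theorem exists_mem_block_apply_eq (hk : k ∈ X) (hj : j ∈ X.image g) :
    ∃ h ∈ block X g, h k = j := by
  obtain ⟨w, hw, rfl⟩ := mem_image.1 hj
  refine ⟨g * swap k w, mem_block.2 fun v hv => ?_, by simp⟩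
  rw [Perm.mul_apply, swap_apply_of_ne_of_ne (ne_of_mem_of_not_mem hk hv).symm
    (ne_of_mem_of_not_mem hw hv).symm]

theorem fiber_block (hk : k ∉ X) (hh : h ∈ block (insert k X) g) :
    fiber (block (insert k X) g) k (h k) = block X h := by
  ext p
  simp only [mem_fiber, mem_block, mem_insert, not_or, and_imp] at hh ⊢
  constructor
  · rintro ⟨hp, hpk⟩ v hv
    rcases eq_or_ne v k with rfl | hvk
    · exact hpk
    · rw [hp v hvk hv, hh v hvk hv]
  · intro hp
    exact ⟨fun v hvk hv => by rw [hp v hv, hh v hvk hv], hp k hk⟩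

theorem card_fiber_fiber_block (hk : k ∉ X) (hi : i ∈ X) (hu : u ∈ (insert k X).image g)
    (hv : v ∈ (insert k X).image g) (huv : u ≠ v) :
    #(fiber (fiber (block (insert k X) g) k u) i v) = (#X - 1).factorial := by
  obtain ⟨p, hp, rfl⟩ := exists_mem_block_apply_eq (mem_insert_self k X) hu
  rw [fiber_block hk hp]
  have hvX : v ∈ X.image p := by
    rw [← image_eq_of_mem_block hp, image_insert, mem_insert] at hv
    exact hv.resolve_left huv.symm
  obtain ⟨q, hq, rfl⟩ := exists_mem_block_apply_eq hi hvX
  have hX : insert i (X.erase i) = X := insert_erase hi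
  have hfiber := fiber_block (notMem_erase i X) (hX.symm ▸ hq)
  rw [hX] at hfiber
  rw [hfiber, card_block, card_erase_of_mem hi]

theorem card_filter_block_apply_mem (hk : k ∉ X) (hi : i ∈ X) {I I' : Finset V}
    (hI : I ⊆ (insert k X).image g) (hI' : I' ⊆ (insert k X).image g) (hdisj : Disjoint I I') :
    #{h ∈ block (insert k X) g | h k ∈ I ∧ h i ∈ I'} = #I * #I' * (#X - 1).factorial := by
  rw [card_eq_sum_card_fiberwise (f := fun h : Perm V => (h k, h i)) (t := I ×ˢ I')
    fun h hh => mem_product.2 (mem_filter.1 hh).2, ← card_product, ← smul_eq_mul, ← sum_const]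
  refine sum_congr rfl fun p hp => ?_
  obtain ⟨hp₁, hp₂⟩ := mem_product.1 hp
  rw [← card_fiber_fiber_block hk hi (hI hp₁) (hI' hp₂) (disjoint_left.1 hdisj hp₁ <| · ▸ hp₂)]
  congr 1
  ext h
  simp only [mem_fiber, mem_filter, Prod.ext_iff]
  grind

theorem sum_card_fiber_of_subset_block (hk : k ∈ X) {R : Finset (Perm V)} (hR : R ⊆ block X g) :
    ∑ j ∈ X.image g, #(fiber R k j) = #R :=
  (card_eq_sum_card_fiberwise fun _ hr => apply_mem_image_of_mem_block (hR hr) hk).symm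

theorem card_le_sum_card_fiber_add {Z W S : Finset (Perm V)} {I : Finset V}
    (hS : S ⊆ Z ∪ W) (hI : ∀ s ∈ S, s k ∈ I) :
    #S ≤ ∑ j ∈ I, (#(fiber Z k j) + #(fiber W k j)) := by
  rw [card_eq_sum_card_fiberwise hI]
  refine sum_le_sum fun j _ => (card_le_card fun s hs => ?_).trans (card_union_le _ _)
  have := hS (mem_filter.1 hs).1
  simp only [mem_union, mem_fiber, mem_filter] at this hs ⊢
  tauto

end Blocks

/-! ### Cut bounds -/

section Separations

variable {V : Type*} [Fintype V] [DecidableEq V] {G : SimpleGraph V} [DecidableRel G.Adj]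
  {X : Finset V} {g b t : Perm V} {A B F : Finset (Perm V)} {i i' j k : V}

/-- The vertex set `F` separates the Cayley graph generated by `edgeSwaps G X` on the coset
`block X g` into parts `A` and `B` with no edges between them. -/
structure IsSeparation (G : SimpleGraph V) [DecidableRel G.Adj] (X : Finset V) (g : Perm V)
    (A B F : Finset (Perm V)) : Prop where
  left_subset : A ⊆ block X g
  right_subset : B ⊆ block X g
  disjoint : Disjoint A B
  eq_sdiff : F = block X g \ (A ∪ B)
  disjoint_jointNeighbors : Disjoint (jointNeighbors G X A) B

namespace IsSeparation

theorem symm (h : IsSeparation G X g A B F) : IsSeparation G X g B A F where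
  left_subset := h.right_subset
  right_subset := h.left_subset
  disjoint := h.disjoint.symm
  eq_sdiff := by rw [h.eq_sdiff, union_comm]
  disjoint_jointNeighbors := disjoint_jointNeighbors_comm h.disjoint_jointNeighbors.symm

theorem subset_block (h : IsSeparation G X g A B F) : F ⊆ block X g :=
  h.eq_sdiff ▸ sdiff_subset

theorem mem_union_of_notMem (h : IsSeparation G X g A B F) (hb : b ∈ block X g) (hbA : b ∉ A) :
    b ∈ F ∪ B := by
  rw [h.eq_sdiff, mem_union, mem_sdiff, mem_union]
  tauto

theorem mul_mem (h : IsSeparation G X g A B F) (hb : b ∈ B) (ht : t ∈ edgeSwaps G X) :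
    b * t ∈ F ∪ B := by
  refine h.mem_union_of_notMem (mem_block.2 fun v hv => ?_) fun hbt => ?_
  · rw [Perm.mul_apply, apply_eq_self_of_mem_edgeSwaps ht hv, mem_block.1 (h.right_subset hb) v hv]
  · exact disjoint_left.1 h.symm.disjoint_jointNeighbors
      (mem_jointNeighbors.2 ⟨b, hb, mul_mem_neighbors ht⟩) hbt

theorem outerNeighbors_subset (h : IsSeparation G X g A B F) : outerNeighbors G X B ⊆ F := by
  intro y hy
  obtain ⟨⟨b, hb, hby⟩, hyB⟩ := mem_outerNeighbors.1 hy
  obtain ⟨t, ht, rfl⟩ := mem_image.1 hby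
  exact (mem_union.1 (h.mul_mem hb ht)).resolve_right hyB

theorem card_add_card_add_card (h : IsSeparation G X g A B F) :
    #A + #B + #F = (#X).factorial := by
  rw [← card_union_of_disjoint h.disjoint, ← card_block X g, h.eq_sdiff, add_comm,
    card_sdiff_add_card_eq_card (union_subset h.left_subset h.right_subset)]

theorem exists_fiber (h : IsSeparation G (insert k X) g A B F) (hk : k ∉ X)
    (hj : j ∈ (insert k X).image g) :
    ∃ p, IsSeparation G X p (fiber A k j) (fiber B k j) (fiber F k j) := by
  obtain ⟨p, hp, rfl⟩ := exists_mem_block_apply_eq (mem_insert_self k X) hj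
  refine ⟨p, ?_, ?_, disjoint_filter_filter h.disjoint, ?_, ?_⟩
  · exact fiber_block hk hp ▸ filter_subset_filter _ h.left_subset
  · exact fiber_block hk hp ▸ filter_subset_filter _ h.right_subset
  · rw [← fiber_block hk hp, h.eq_sdiff]
    ext z
    simp only [mem_sdiff, mem_union, mem_fiber]
    tauto
  · refine h.disjoint_jointNeighbors.mono ?_ (filter_subset _ _)
    exact biUnion_subset_biUnion_of_subset_left _ (filter_subset _ _) |>.trans'
      (biUnion_mono fun r _ => neighbors_mono (subset_insert k X) r)

theorem mul_swap_mem (h : IsSeparation G (insert k X) g A B F) (hi : i ∈ X) (hki : G.Adj k i)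
    (hb : b ∈ B) : b * swap k i ∈ F ∪ B :=
  h.mul_mem hb (swap_mem_edgeSwaps (mem_insert_self k X) (mem_insert_of_mem hi) hki)

theorem mul_swap_apply_mem_erase (h : IsSeparation G (insert k X) g A B F) (hi : i ∈ X)
    (hki : G.Adj k i) (hb : b ∈ fiber B k j) :
    (b * swap k i) k ∈ ((insert k X).image g).erase j := by
  obtain ⟨hbB, rfl⟩ := mem_fiber.1 hb
  rw [Perm.mul_apply, swap_apply_left]
  exact mem_erase.2 ⟨b.injective.ne hki.ne.symm,
    apply_mem_image_of_mem_block (h.right_subset hbB) (mem_insert_of_mem hi)⟩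

theorem card_fiber_le_sum_erase (h : IsSeparation G (insert k X) g A B F) (hi : i ∈ X)
    (hki : G.Adj k i) (j : V) :
    #(fiber B k j) ≤
      ∑ x ∈ ((insert k X).image g).erase j, (#(fiber F k x) + #(fiber B k x)) := by
  rw [← card_image_of_injective _ (mul_left_injective (swap k i))]
  refine card_le_sum_card_fiber_add (image_subset_iff.2 fun b hb => ?_) (forall_mem_image.2 ?_)
  · exact h.mul_swap_mem hi hki (mem_fiber.1 hb).1
  · exact fun b hb => h.mul_swap_apply_mem_erase hi hki hb

theorem two_mul_card_fiber_le_sum_erase (h : IsSeparation G (insert k X) g A B F)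
    (hk : HasTwoNeighbors G X k i i') (j : V) :
    2 * #(fiber B k j) ≤
      ∑ x ∈ ((insert k X).image g).erase j, (#(fiber F k x) + #(fiber B k x)) := by
  have hdisj : Disjoint ((fiber B k j).image (· * swap k i))
      ((fiber B k j).image (· * swap k i')) := by
    rw [disjoint_left]
    intro z hz hz'
    obtain ⟨y, hy, rfl⟩ := mem_image.1 hz
    obtain ⟨x, hx, hxy⟩ := mem_image.1 hz'
    have hyx := (hk.apply_eq_of_mul_swap_eq hxy.symm).2.1
    rw [(mem_fiber.1 hy).2, ← (mem_fiber.1 hx).2] at hyx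
    exact hk.adj_left.ne (x.injective hyx)
  calc 2 * #(fiber B k j)
      = #((fiber B k j).image (· * swap k i) ∪ (fiber B k j).image (· * swap k i')) := by
        rw [card_union_of_disjoint hdisj, card_image_of_injective _ (mul_left_injective _),
          card_image_of_injective _ (mul_left_injective _), two_mul]
    _ ≤ _ := by
        refine card_le_sum_card_fiber_add ?_ (forall_mem_union.2 ?_)
        · exact union_subset
            (image_subset_iff.2 fun b hb =>
              h.mul_swap_mem hk.mem_left hk.adj_left (mem_fiber.1 hb).1)
            (image_subset_iff.2 fun b hb =>
              h.mul_swap_mem hk.mem_right hk.adj_right (mem_fiber.1 hb).1)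
        · exact ⟨forall_mem_image.2 fun b hb =>
              h.mul_swap_apply_mem_erase hk.mem_left hk.adj_left hb,
            forall_mem_image.2 fun b hb =>
              h.mul_swap_apply_mem_erase hk.mem_right hk.adj_right hb⟩

theorem card_fiber_le_sum_erase_erase (h : IsSeparation G (insert k X) g A B F)
    (hk : HasTwoNeighbors G X k i i') {j₁ : V} (hj : j ≠ j₁) :
    #(fiber B k j) ≤
      ∑ x ∈ (((insert k X).image g).erase j).erase j₁, (#(fiber F k x) + #(fiber B k x)) := by
  rw [← hk.card_image_exitNeighbor_fiber hj]
  refine card_le_sum_card_fiber_add (image_subset_iff.2 fun b hb => ?_)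
    (forall_mem_image.2 fun b hb => mem_erase.2 ⟨(hk.exitNeighbor_apply_ne j₁ b).2, ?_⟩)
  all_goals
    rw [exitNeighbor]
    split_ifs
  · exact h.mul_swap_mem hk.mem_right hk.adj_right (mem_fiber.1 hb).1
  · exact h.mul_swap_mem hk.mem_left hk.adj_left (mem_fiber.1 hb).1
  · exact h.mul_swap_apply_mem_erase hk.mem_right hk.adj_right hb
  · exact h.mul_swap_apply_mem_erase hk.mem_left hk.adj_left hb

-- Each `z` with `z k ∈ I`, `z i ∈ I'` lies outside `A`, or lies in `A` and is then moved by
-- `swap k i` into `F ∪ A`, into a fibre indexed by `I'`.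
theorem card_mul_card_mul_factorial_le (h : IsSeparation G (insert k X) g A B F) (hk : k ∉ X)
    (hi : i ∈ X) (hki : G.Adj k i) {I I' : Finset V} (hI : I ⊆ (insert k X).image g)
    (hI' : I' ⊆ (insert k X).image g) (hdisj : Disjoint I I') :
    #I * #I' * (#X - 1).factorial ≤
      ∑ j ∈ I, (#(fiber F k j) + #(fiber B k j)) +
        ∑ j ∈ I', (#(fiber F k j) + #(fiber A k j)) := by
  rw [← card_filter_block_apply_mem hk hi hI hI' hdisj,
    ← card_filter_add_card_filter_not (· ∈ A), add_comm]
  refine add_le_add (card_le_sum_card_fiber_add (fun z hz => ?_) fun z hz => ?_) ?_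
  · rw [mem_filter, mem_filter] at hz
    exact h.mem_union_of_notMem hz.1.1 hz.2
  · rw [mem_filter, mem_filter] at hz
    exact hz.1.2.1
  · rw [← card_image_of_injective _ (mul_left_injective (swap k i))]
    refine card_le_sum_card_fiber_add (image_subset_iff.2 fun z hz => ?_)
      (forall_mem_image.2 fun z hz => ?_)
    · exact h.symm.mul_swap_mem hi hki (mem_filter.1 hz).2
    · rw [mem_filter, mem_filter] at hz
      rw [Perm.mul_apply, swap_apply_left]
      exact hz.1.2.2

end IsSeparation

/-- Removing at most `N` vertices from a coset of `Sym(X)` leaves no two separated parts with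
more than `β` elements each. -/
def CutBound (G : SimpleGraph V) [DecidableRel G.Adj] (X : Finset V) (N β : ℕ) : Prop :=
  ∀ g A B F, IsSeparation G X g A B F → #F ≤ N → #A ≤ β ∨ #B ≤ β

variable {N M β : ℕ}

theorem CutBound.mono (h : CutBound G X N M) (hM : M ≤ β) : CutBound G X N β :=
  fun g A B F hS hF => (h g A B F hS hF).imp hM.trans' hM.trans'

theorem CutBound.of_lt_card_outerNeighbors (h : CutBound G X N M)
    (hX : ∀ R : Finset (Perm V), β < #R → #R ≤ M → N < #(outerNeighbors G X R)) :
    CutBound G X N β := by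
  have hpart : ∀ g A B F, IsSeparation G X g A B F → #F ≤ N → #B ≤ M → #B ≤ β := by
    intro g A B F hS hF hB
    by_contra! hcon
    exact (hX B hcon hB).not_ge ((card_le_card hS.outerNeighbors_subset).trans hF)
  intro g A B F hS hF
  exact (h g A B F hS hF).imp (hpart g B A F hS.symm hF) (hpart g A B F hS hF)

end Separations

section Profiles

/-- The local expansion inequality for a set of size `s` with outer boundary of size `f`. -/
def ExpansionBound (d s f : ℕ) : Prop :=
  0 < s → 2 * s * d + 2 ≤ 2 * f + s * (s + 1)

/-- Within the range `s ≤ β`, `f ≤ K`, the expansion inequality forces `s ≤ (q / p) * f`. -/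
def SlopeBound (d β K p q : ℕ) : Prop :=
  ∀ ⦃s f⦄, s ≤ β → f ≤ K → ExpansionBound d s f → p * s ≤ q * f

variable {ι : Type*} [DecidableEq ι] {J S : Finset ι} {a α b : ι → ℕ} {j₀ j₁ : ι}
  {N β d E K M p q : ℕ}

/-- Sizes of the fibres of one part of a separation (`b`) and of the separating set (`a`). -/
structure SideProfile (d : ℕ) (J : Finset ι) (a b : ι → ℕ) : Prop where
  expansion : ∀ j ∈ J, ExpansionBound d (b j) (a j)
  le_sum_erase : ∀ j ∈ J, b j ≤ ∑ x ∈ J.erase j, (a x + b x)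

/-- Sizes of the fibres of the separating set (`a`) and of the two parts (`α` and `b`) of a
separation, the fibres being taken at a vertex with a neighbour in the smaller block. -/
structure SeparationProfile (N β d : ℕ) (J : Finset ι) (a α b : ι → ℕ) : Prop where
  cut : ∀ j ∈ J, a j ≤ N → α j ≤ β ∨ b j ≤ β
  uniform : ∀ S ⊆ J, ∑ j ∈ S, (a j + min (α j) (b j)) < (#S - 1) * (#J - 2).factorial →
    (∀ j ∈ S, α j ≤ b j) ∨ ∀ j ∈ S, b j ≤ α j
  left : SideProfile d J a α
  right : SideProfile d J a b

/-- The additional inequalities between fibre sizes available when the fibres are taken at a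
vertex with two neighbours in the smaller block. -/
structure DoubleTransfer (J : Finset ι) (a b : ι → ℕ) : Prop where
  two_mul_le : ∀ j, 2 * b j ≤ ∑ x ∈ J.erase j, (a x + b x)
  le_sum_erase_erase : ∀ ⦃j j₁⦄, j ≠ j₁ → b j ≤ ∑ x ∈ (J.erase j).erase j₁, (a x + b x)

theorem sum_le_of_forall_mul_le {ι : Type*} {S : Finset ι} {a s : ι → ℕ} {p q E M : ℕ}
    (h : ∀ j ∈ S, p * s j ≤ q * a j) (hE : ∑ j ∈ S, a j ≤ E) (hM : q * E < p * (M + 1)) :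
    ∑ j ∈ S, s j ≤ M := by
  have hsum : p * ∑ j ∈ S, s j ≤ q * E := calc
    p * ∑ j ∈ S, s j ≤ q * ∑ j ∈ S, a j := by
      rw [mul_sum, mul_sum]
      exact sum_le_sum h
    _ ≤ q * E := Nat.mul_le_mul_left q hE
  exact Nat.lt_succ_iff.1 (lt_of_mul_lt_mul_left (hsum.trans_lt hM) p.zero_le)

theorem forall_le_of_sum_le {ι : Type*} {S : Finset ι} {a : ι → ℕ} (h : ∑ j ∈ S, a j ≤ E) :
    ∀ j ∈ S, a j ≤ E :=
  fun _ hj => (single_le_sum_of_canonicallyOrdered hj).trans h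

namespace SeparationProfile

theorem sum_le_or_sum_le (h : SeparationProfile N β d J a α b) (hS : S ⊆ J) (hKN : K ≤ N)
    (hK : ∀ j ∈ S, a j ≤ K) (hE : ∑ j ∈ S, a j ≤ E) (hslope : SlopeBound d β K p q)
    (hM : q * E < p * (M + 1)) (hcross : E + M < (#S - 1) * (#J - 2).factorial) :
    ∑ j ∈ S, α j ≤ M ∨ ∑ j ∈ S, b j ≤ M := by
  have hmin : ∑ j ∈ S, min (α j) (b j) ≤ M := by
    refine sum_le_of_forall_mul_le (fun j hj => ?_) hE hM
    refine hslope ?_ (hK j hj) ?_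
    · exact min_le_iff.2 (h.cut j (hS hj) ((hK j hj).trans hKN))
    · rcases min_choice (α j) (b j) with hm | hm <;> rw [hm]
      exacts [h.left.expansion j (hS hj), h.right.expansion j (hS hj)]
  have huniform := h.uniform S hS (by rw [sum_add_distrib]; lia)
  refine huniform.imp (fun hle => ?_) fun hle => ?_
  · exact (sum_congr rfl fun j hj => min_eq_left (hle j hj)).symm.trans_le hmin
  · exact (sum_congr rfl fun j hj => min_eq_right (hle j hj)).symm.trans_le hmin

theorem sum_le_or_sum_le_of_forall_le (h : SeparationProfile N β d J a α b)
    (hN : ∀ j ∈ J, a j ≤ N) (hE : ∑ j ∈ J, a j ≤ E) (hslope : SlopeBound d β N p q)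
    (hM : q * E < p * (M + 1)) (hcross : E + M < (#J - 1) * (#J - 2).factorial) :
    ∑ j ∈ J, α j ≤ M ∨ ∑ j ∈ J, b j ≤ M :=
  h.sum_le_or_sum_le Subset.rfl le_rfl hN hE hslope hM hcross

theorem sum_erase_le_or_sum_erase_le (h : SeparationProfile N β d J a α b) (hj₀ : j₀ ∈ J)
    (hKN : K ≤ N) (hK : ∀ j ∈ J.erase j₀, a j ≤ K) (hE : ∑ j ∈ J.erase j₀, a j ≤ E)
    (hslope : SlopeBound d β K p q) (hM : q * E < p * (M + 1))
    (hcross : E + M < (#J - 2) * (#J - 2).factorial) :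
    ∑ j ∈ J.erase j₀, α j ≤ M ∨ ∑ j ∈ J.erase j₀, b j ≤ M := by
  refine h.sum_le_or_sum_le (erase_subset _ _) hKN hK hE hslope hM ?_
  rwa [card_erase_of_mem hj₀, Nat.sub_sub]

end SeparationProfile

theorem SideProfile.sum_le (h : SideProfile d J a b) (hj₀ : j₀ ∈ J)
    (hE : ∑ j ∈ J.erase j₀, a j ≤ E) (hM : ∑ j ∈ J.erase j₀, b j ≤ M) :
    ∑ j ∈ J, b j ≤ E + 2 * M := by
  have htransfer := h.le_sum_erase j₀ hj₀
  rw [sum_add_distrib] at htransfer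
  rw [← add_sum_erase J b hj₀]
  lia

theorem DoubleTransfer.two_mul_sum_le (h : DoubleTransfer J a b) (hj₀ : j₀ ∈ J)
    (hE : ∑ j ∈ J.erase j₀, a j ≤ E) (hM : ∑ j ∈ J.erase j₀, b j ≤ M) :
    2 * ∑ j ∈ J, b j ≤ E + 3 * M := by
  have htransfer := h.two_mul_le j₀
  rw [sum_add_distrib] at htransfer
  rw [← add_sum_erase J b hj₀]
  lia

theorem DoubleTransfer.sum_le (h : DoubleTransfer J a b) (hj₀ : j₀ ∈ J)
    (hj₁ : j₁ ∈ J.erase j₀) (hE : ∑ j ∈ (J.erase j₀).erase j₁, a j ≤ E)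
    (hM : ∑ j ∈ (J.erase j₀).erase j₁, b j ≤ M) : ∑ j ∈ J, b j ≤ 2 * E + 3 * M := by
  have h₀ := h.le_sum_erase_erase (ne_of_mem_erase hj₁).symm
  have h₁ := h.le_sum_erase_erase (ne_of_mem_erase hj₁)
  rw [erase_right_comm] at h₁
  rw [sum_add_distrib] at h₀ h₁
  rw [← add_sum_erase J b hj₀, ← add_sum_erase _ b hj₁]
  lia

-- If some fibre of the separating set is larger than `N`, the others have total size at most `e`.
theorem SeparationProfile.sum_le_or_sum_le_of_sum_le {e p₁ q₁ M₁ : ℕ}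
    (h : SeparationProfile N β d J a α b) (hE : ∑ j ∈ J, a j ≤ E) (hEN : E ≤ N + 1 + e)
    (he : e ≤ N) (hslope : SlopeBound d β N p q) (hM : q * E < p * (M + 1))
    (hcross : E + M < (#J - 1) * (#J - 2).factorial) (hslope₁ : SlopeBound d β e p₁ q₁)
    (hM₁ : q₁ * e < p₁ * (M₁ + 1)) (hle : e + 2 * M₁ ≤ M)
    (hcross₁ : e + M₁ < (#J - 2) * (#J - 2).factorial) :
    ∑ j ∈ J, α j ≤ M ∨ ∑ j ∈ J, b j ≤ M := by
  by_cases hN : ∀ j ∈ J, a j ≤ N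
  · exact h.sum_le_or_sum_le_of_forall_le hN hE hslope hM hcross
  push Not at hN
  obtain ⟨j₀, hj₀, hN₀⟩ := hN
  have hrest : ∑ j ∈ J.erase j₀, a j ≤ e := by
    have := add_sum_erase J a hj₀
    lia
  refine (h.sum_erase_le_or_sum_erase_le hj₀ he (forall_le_of_sum_le hrest) hrest hslope₁ hM₁
    hcross₁).imp (fun hα => ?_) fun hb => ?_
  · exact (h.left.sum_le hj₀ hrest hα).trans hle
  · exact (h.right.sum_le hj₀ hrest hb).trans hle

end Profiles

section CutBounds

variable {V : Type*} [Fintype V] [DecidableEq V] {G : SimpleGraph V} [DecidableRel G.Adj]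
  {X : Finset V} {g : Perm V} {A B F : Finset (Perm V)} {i i' k : V} {N N' M β d : ℕ}

namespace IsSeparation

theorem sideProfile (h : IsSeparation G (insert k X) g A B F) (hL : LocalExpansion G X d)
    (hk : k ∉ X) (hi : i ∈ X) (hki : G.Adj k i) :
    SideProfile d ((insert k X).image g) (fun j => #(fiber F k j)) (fun j => #(fiber B k j)) where
  expansion := fun j hj hpos => by
    obtain ⟨p, hp⟩ := h.exists_fiber hk hj
    have := hL _ (card_pos.1 hpos)
    have := card_le_card hp.outerNeighbors_subset
    lia
  le_sum_erase := fun j _ => h.card_fiber_le_sum_erase hi hki j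

theorem doubleTransfer (h : IsSeparation G (insert k X) g A B F)
    (hk : HasTwoNeighbors G X k i i') :
    DoubleTransfer ((insert k X).image g) (fun j => #(fiber F k j)) (fun j => #(fiber B k j)) where
  two_mul_le := h.two_mul_card_fiber_le_sum_erase hk
  le_sum_erase_erase := fun _ _ => h.card_fiber_le_sum_erase_erase hk

-- If both `I` (where `A` has the larger fibres) and `I'` (where `B` has) are nonempty, then
-- `#I * #I'` is at least `#S - 1` and crossing edges are too numerous.
theorem uniform (h : IsSeparation G (insert k X) g A B F) (hk : k ∉ X) (hi : i ∈ X)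
    (hki : G.Adj k i) {S : Finset V} (hS : S ⊆ (insert k X).image g)
    (hlt : ∑ j ∈ S, (#(fiber F k j) + min #(fiber A k j) #(fiber B k j)) <
      (#S - 1) * (#X - 1).factorial) :
    (∀ j ∈ S, #(fiber A k j) ≤ #(fiber B k j)) ∨ ∀ j ∈ S, #(fiber B k j) ≤ #(fiber A k j) := by
  by_contra! hcon
  obtain ⟨⟨j₁, hj₁, hBA⟩, j₂, hj₂, hAB⟩ := hcon
  have hcross := h.card_mul_card_mul_factorial_le hk hi hki
    ((filter_subset (fun j => #(fiber B k j) ≤ #(fiber A k j)) S).trans hS)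
    ((filter_subset (fun j => ¬ #(fiber B k j) ≤ #(fiber A k j)) S).trans hS)
    (disjoint_filter_filter_not _ _ _)
  have hcard := card_filter_add_card_filter_not (s := S) fun j => #(fiber B k j) ≤ #(fiber A k j)
  rw [← sum_filter_add_sum_filter_not S fun j => #(fiber B k j) ≤ #(fiber A k j)] at hlt
  set I := {j ∈ S | #(fiber B k j) ≤ #(fiber A k j)}
  set I' := {j ∈ S | ¬ #(fiber B k j) ≤ #(fiber A k j)}
  have hIpos : 1 ≤ #I := card_pos.2 ⟨j₁, mem_filter.2 ⟨hj₁, hBA.le⟩⟩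
  have hI'pos : 1 ≤ #I' := card_pos.2 ⟨j₂, mem_filter.2 ⟨hj₂, hAB.not_ge⟩⟩
  have hproduct : #S - 1 ≤ #I * #I' := by
    rw [← hcard, Nat.sub_le_iff_le_add]
    nlinarith
  have hsumI : ∀ j ∈ I, #(fiber F k j) + min #(fiber A k j) #(fiber B k j) =
      #(fiber F k j) + #(fiber B k j) := fun j hj => by
    rw [min_eq_right (mem_filter.1 hj).2]
  have hsumI' : ∀ j ∈ I', #(fiber F k j) + min #(fiber A k j) #(fiber B k j) =
      #(fiber F k j) + #(fiber A k j) := fun j hj => by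
    rw [min_eq_left (not_le.1 (mem_filter.1 hj).2).le]
  rw [sum_congr rfl hsumI, sum_congr rfl hsumI'] at hlt
  exact hlt.not_ge ((Nat.mul_le_mul_right _ hproduct).trans hcross)

theorem profile (h : IsSeparation G (insert k X) g A B F) (hC : CutBound G X N' β)
    (hL : LocalExpansion G X d) (hk : k ∉ X) (hi : i ∈ X) (hki : G.Adj k i) :
    SeparationProfile N' β d ((insert k X).image g) (fun j => #(fiber F k j))
      (fun j => #(fiber A k j)) (fun j => #(fiber B k j)) where
  cut := fun j hj hF => by
    obtain ⟨p, hp⟩ := h.exists_fiber hk hj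
    exact hC p _ _ _ hp hF
  uniform := fun S hS hlt => h.uniform hk hi hki hS <| by
    rwa [card_image_of_injective _ g.injective, card_insert_of_notMem hk, Nat.add_sub_add_right]
      at hlt
  left := h.symm.sideProfile hL hk hi hki
  right := h.sideProfile hL hk hi hki

theorem sum_card_fibers (h : IsSeparation G (insert k X) g A B F) :
    ∑ j ∈ (insert k X).image g, #(fiber F k j) = #F ∧
    ∑ j ∈ (insert k X).image g, #(fiber A k j) = #A ∧
    ∑ j ∈ (insert k X).image g, #(fiber B k j) = #B :=
  have hk := mem_insert_self k X
  ⟨sum_card_fiber_of_subset_block hk h.subset_block,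
    sum_card_fiber_of_subset_block hk h.left_subset,
    sum_card_fiber_of_subset_block hk h.right_subset⟩

end IsSeparation

namespace CutBound

theorem of_profile (hC : CutBound G X N' β) (hL : LocalExpansion G X d) (hk : k ∉ X)
    (hi : i ∈ X) (hki : G.Adj k i)
    (hprofile : ∀ (J : Finset V) (a α b : V → ℕ), #J = #X + 1 →
      SeparationProfile N' β d J a α b → ∑ j ∈ J, a j ≤ N →
      ∑ j ∈ J, α j ≤ M ∨ ∑ j ∈ J, b j ≤ M) :
    CutBound G (insert k X) N M := by
  intro g A B F h hF
  obtain ⟨hsumF, hsumA, hsumB⟩ := h.sum_card_fibers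
  rw [← hsumA, ← hsumB]
  refine hprofile _ _ _ _ ?_ (h.profile hC hL hk hi hki) (hsumF.trans_le hF)
  rw [card_image_of_injective _ g.injective, card_insert_of_notMem hk]

theorem of_profile_of_hasTwoNeighbors (hC : CutBound G X N' β) (hL : LocalExpansion G X d)
    (hk : HasTwoNeighbors G X k i i')
    (hprofile : ∀ (J : Finset V) (a α b : V → ℕ), #J = #X + 1 →
      SeparationProfile N' β d J a α b → DoubleTransfer J a α → DoubleTransfer J a b →
      ∑ j ∈ J, a j ≤ N → ∑ j ∈ J, α j ≤ M ∨ ∑ j ∈ J, b j ≤ M) :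
    CutBound G (insert k X) N M := by
  intro g A B F h hF
  obtain ⟨hsumF, hsumA, hsumB⟩ := h.sum_card_fibers
  rw [← hsumA, ← hsumB]
  refine hprofile _ _ _ _ ?_ (h.profile hC hL hk.notMem hk.mem_left hk.adj_left)
    (h.symm.doubleTransfer hk) (h.doubleTransfer hk) (hsumF.trans_le hF)
  rw [card_image_of_injective _ g.injective, card_insert_of_notMem hk.notMem]

end CutBound

end CutBounds

section TreeCutBounds

variable {V : Type*} [Fintype V] [DecidableEq V] {G : SimpleGraph V} [DecidableRel G.Adj]
  {X : Finset V} {i k : V} {d : ℕ}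

theorem factorial_ge_of_five_le {n : ℕ} (hn : 5 ≤ n) : 24 ≤ (n - 1).factorial :=
  Nat.factorial_le (show 4 ≤ n - 1 by lia)

theorem TreeOn.cutBound_of_card_eq_three (hX : TreeOn G X) (h3 : #X = 3) : CutBound G X 1 0 := by
  have hL := hX.localExpansion
  rw [h3] at hL
  have hpart : ∀ g A B F, IsSeparation G X g A B F → 0 < #B →
      2 * #B * 2 + 2 ≤ 2 * #F + #B * (#B + 1) := fun g A B F h hpos =>
    (hL B (card_pos.1 hpos)).trans (by grw [h.outerNeighbors_subset])
  intro g A B F h hF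
  by_contra! hcon
  have hA := hpart g B A F h.symm hcon.1
  have hB := hpart g A B F h hcon.2
  have hcard := h.card_add_card_add_card
  rw [h3] at hcard
  have hsum : #A + #B + #F = 6 := hcard
  have hA3 : 3 ≤ #A := by nlinarith
  have hB3 : 3 ≤ #B := by nlinarith
  rw [show #A = 3 by lia, show #F = 0 by lia] at hA
  lia

namespace CutBound

theorem insert_leaf_of_card_eq_three (hC : CutBound G X 1 0) (hL : LocalExpansion G X 2)
    (h3 : #X = 3) (hk : k ∉ X) (hi : i ∈ X) (hki : G.Adj k i) :
    CutBound G (insert k X) 3 1 := by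
  have hslope : ∀ K, SlopeBound 2 0 K 1 0 := by
    intro K s f hs _ _
    lia
  refine of_profile hC hL hk hi hki fun J a α b hJ h hN => ?_
  rw [h3] at hJ
  refine h.sum_le_or_sum_le_of_sum_le (e := 1) (M₁ := 0) hN le_rfl le_rfl (hslope 1) (by norm_num)
    ?_ (hslope 1) (by norm_num) le_rfl ?_
  all_goals rw [hJ]; decide

theorem insert_leaf_of_card_eq_four (hC : CutBound G X 3 1) (hL : LocalExpansion G X 3)
    (h4 : #X = 4) (hk : k ∉ X) (hi : i ∈ X) (hki : G.Adj k i) :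
    CutBound G (insert k X) 7 5 := by
  have hslope : SlopeBound 3 1 3 3 1 := by
    intro s f hs hf h
    unfold ExpansionBound at h
    interval_cases s <;> lia
  refine of_profile hC hL hk hi hki fun J a α b hJ h hN => ?_
  rw [h4] at hJ
  refine h.sum_le_or_sum_le_of_sum_le (e := 3) (M₁ := 1) hN le_rfl le_rfl hslope (by norm_num)
    ?_ hslope (by norm_num) le_rfl ?_
  all_goals rw [hJ]; decide

theorem insert_leaf_of_card_eq_four_or_five (hC : CutBound G X 7 3) (hL : LocalExpansion G X 4)
    (hX : #X = 4 ∨ #X = 5) (hk : k ∉ X) (hi : i ∈ X) (hki : G.Adj k i) :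
    CutBound G (insert k X) 11 4 := by
  have hslope : SlopeBound 4 3 7 7 3 := by
    intro s f hs hf h
    unfold ExpansionBound at h
    interval_cases s <;> lia
  have hslope₁ : SlopeBound 4 3 3 1 0 := by
    intro s f hs hf h
    unfold ExpansionBound at h
    interval_cases s <;> lia
  refine of_profile hC hL hk hi hki fun J a α b hJ h hN => ?_
  refine h.sum_le_or_sum_le_of_sum_le (e := 3) (M₁ := 0) hN le_rfl (by norm_num) hslope
    (by norm_num) ?_ hslope₁ (by norm_num) (by norm_num) ?_
  all_goals rw [hJ]; rcases hX with hX | hX <;> rw [hX] <;> decide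

theorem insert_leaf_of_five_le (hC : CutBound G X (4 * d - 9) 4) (hL : LocalExpansion G X d)
    (hd : 5 ≤ d) (hdX : d ≤ #X) (hk : k ∉ X) (hi : i ∈ X) (hki : G.Adj k i) :
    CutBound G (insert k X) (4 * (d + 1) - 9) 5 := by
  have hslope : SlopeBound d 4 (4 * d - 9) (4 * d - 9) 4 := by
    intro s f hs hf h
    unfold ExpansionBound at h
    interval_cases s <;> lia
  have hslope₁ : SlopeBound d 4 3 1 0 := by
    intro s f hs hf h
    unfold ExpansionBound at h
    interval_cases s <;> lia
  have hfactorial := factorial_ge_of_five_le (hd.trans hdX)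
  refine of_profile hC hL hk hi hki fun J a α b hJ h hN => ?_
  refine h.sum_le_or_sum_le_of_sum_le (e := 3) (M₁ := 0) hN (by lia) (by lia) hslope
    (by lia) ?_ hslope₁ (by norm_num) (by norm_num) ?_
  all_goals
    rw [hJ]
    refine lt_of_lt_of_le ?_ (Nat.mul_le_mul_left _ hfactorial)
    lia

theorem of_localExpansion (hC : CutBound G X (4 * d - 9) 6) (hL : LocalExpansion G X d)
    (hd : 6 ≤ d) : CutBound G X (4 * d - 9) 4 := by
  refine hC.of_lt_card_outerNeighbors fun R h4 h6 => ?_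
  have hR := hL R (card_pos.1 (by lia))
  have hcard : #R = 5 ∨ #R = 6 := by lia
  rcases hcard with h | h <;> rw [h] at hR <;> lia

end CutBound

theorem TreeOn.cutBound_of_card_eq_four (hX : TreeOn G X) (h4 : #X = 4) : CutBound G X 3 1 := by
  cases hX with
  | singleton => simp at h4
  | insert_leaf hX hk hi hki _ =>
    rw [card_insert_of_notMem hk] at h4
    have h3 : _ = 3 := Nat.succ_injective h4
    have hL := hX.localExpansion
    rw [h3] at hL
    exact (hX.cutBound_of_card_eq_three h3).insert_leaf_of_card_eq_three hL h3 hk hi hki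

theorem TreeOn.cutBound_of_card_eq_five (hX : TreeOn G X) (hG : G.CliqueFree 3) (h5 : #X = 5) :
    CutBound G X 7 3 := by
  have hedges := hX.card_edgeSwaps
  refine CutBound.of_lt_card_outerNeighbors (M := 5) ?_ fun R hR hR' =>
    eight_le_card_outerNeighbors hG h5.le (by lia) hR (by lia)
  cases hX with
  | singleton => simp at h5
  | insert_leaf hX hk hi hki _ =>
    rw [card_insert_of_notMem hk] at h5
    have h4 : _ = 4 := Nat.succ_injective h5
    have hL := hX.localExpansion
    rw [h4] at hL
    exact (hX.cutBound_of_card_eq_four h4).insert_leaf_of_card_eq_four hL h4 hk hi hki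

theorem TreeOn.cutBound (hX : TreeOn G X) (hG : G.CliqueFree 3) (h6 : 6 ≤ #X) :
    CutBound G X (4 * (#X - 1) - 9) 4 := by
  induction hX with
  | singleton => simp at h6
  | @insert_leaf X k i hX hk hi hki huniq ih =>
    have hL' := (hX.insert_leaf hk hi hki huniq).localExpansion
    have hL := hX.localExpansion
    rw [card_insert_of_notMem hk, Nat.add_sub_cancel] at hL' ⊢
    rw [card_insert_of_notMem hk] at h6
    obtain h5 | h6 : #X = 5 ∨ 6 ≤ #X := by lia
    · rw [h5] at hL ⊢
      exact (hX.cutBound_of_card_eq_five hG h5).insert_leaf_of_card_eq_four_or_five hL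
        (Or.inr h5) hk hi hki
    · have hC := (ih h6).insert_leaf_of_five_le hL (by lia) (by lia) hk hi hki
      rw [Nat.sub_add_cancel (by lia)] at hC
      exact (hC.mono (by norm_num)).of_localExpansion hL' h6

end TreeCutBounds

section SmallIndexSets

variable {V : Type*} [DecidableEq V] {G : SimpleGraph V} {X : Finset V} {i i' : V}

theorem card_edgeSwaps_pair [Fintype V] [DecidableRel G.Adj] (hii' : i ≠ i')
    (hnadj : ¬ G.Adj i i') :
    #(edgeSwaps G {i, i'}) = 0 := by
  have hsingleton := (TreeOn.singleton (G := G) i').card_edgeSwaps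
  rw [card_singleton] at hsingleton
  rw [card_edgeSwaps_insert (notMem_singleton.2 hii'), filter_singleton, if_neg hnadj]
  exact Nat.succ_injective hsingleton

theorem TreeOn.exists_common_neighbor_of_card_eq_three [Finite V] (hX : TreeOn G X) (h3 : #X = 3)
    (hi : i ∈ X) (hi' : i' ∈ X) (hii' : i ≠ i') (hnadj : ¬ G.Adj i i') :
    ∃ q, q ∉ ({i, i'} : Finset V) ∧ X = insert q {i, i'} ∧ G.Adj q i ∧ G.Adj q i' := by
  classical
  have := Fintype.ofFinite V
  have hpair : ({i, i'} : Finset V) ⊆ X := insert_subset hi (singleton_subset_iff.2 hi')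
  obtain ⟨q, hq, rfl⟩ := (covBy_iff_exists_insert.1 <|
    covBy_iff_card_sdiff_eq_one.2 ⟨hpair, by rw [card_sdiff_of_subset hpair, card_pair hii', h3]⟩)
  have hedges := hX.card_edgeSwaps
  rw [h3, card_edgeSwaps_insert hq, card_edgeSwaps_pair hii' hnadj, zero_add] at hedges
  have hall := card_filter_eq_iff.1 ((Nat.succ_injective hedges).trans (card_pair hii').symm)
  exact ⟨q, hq, rfl, hall i (by simp), hall i' (by simp)⟩

theorem UnicyclicOn.four_le_card [Finite V] (hX : UnicyclicOn G X) (hG : G.CliqueFree 3) :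
    4 ≤ #X := by
  classical
  have := Fintype.ofFinite V
  induction hX with
  | insert_leaf _ _ _ _ _ ih => exact ih.trans (card_le_card (subset_insert _ _))
  | @close_cycle X k i i' hX hk hi hi' hii' hki hki' _ =>
    have hpair : ({i, i'} : Finset V) ⊆ X := insert_subset hi (singleton_subset_iff.2 hi')
    have hcard := card_le_card hpair
    have hedges := hX.card_edgeSwaps
    rw [card_pair hii'] at hcard
    rw [card_insert_of_notMem hk]
    by_contra! hlt
    rw [← eq_of_subset_of_card_le hpair (by rw [card_pair hii']; lia),
      card_edgeSwaps_pair hii' (not_adj_of_cliqueFree_three hG hki hki'), card_pair hii'] at hedges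
    lia

end SmallIndexSets

section UnicyclicCutBounds

variable {V : Type*} [Fintype V] [DecidableEq V] {G : SimpleGraph V} [DecidableRel G.Adj]
  {X : Finset V} {g : Perm V} {A B F R : Finset (Perm V)} {i i' j k q u v : V} {d : ℕ}

section FibersAtAValue

theorem sum_card_fiber_apply_of_subset_block (hR : R ⊆ block X g) (hj : j ∈ X.image g) :
    ∑ v ∈ X, #(fiber R v j) = #R := by
  rw [card_eq_sum_card_fiberwise (f := fun r : Perm V => r⁻¹ j) (t := X)]
  · refine sum_congr rfl fun v _ => congrArg card (filter_congr fun r _ => ?_)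
    rw [Perm.inv_eq_iff_eq, eq_comm]
  · intro r hr
    obtain ⟨w, hw, rfl⟩ := mem_image.1 (image_eq_of_mem_block (hR hr) ▸ hj)
    simpa using hw

theorem IsSeparation.card_fiber_le_of_adj (h : IsSeparation G X g A B F) (hu : u ∈ X)
    (hv : v ∈ X) (huv : G.Adj u v) (j : V) :
    #(fiber B u j) ≤ #(fiber F v j) + #(fiber B v j) := by
  rw [← card_image_of_injective _ (mul_left_injective (swap u v))]
  refine (card_le_card ?_).trans (card_union_le _ _)
  intro z hz
  obtain ⟨b, hb, rfl⟩ := mem_image.1 hz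
  obtain ⟨hbB, hbu⟩ := mem_fiber.1 hb
  have hmem := mem_union.1 (h.mul_mem hbB (swap_mem_edgeSwaps hu hv huv))
  have hvalue : (b * swap u v) v = j := by rw [Perm.mul_apply, swap_apply_right, hbu]
  exact mem_union.2 (hmem.imp (mem_fiber.2 ⟨·, hvalue⟩) (mem_fiber.2 ⟨·, hvalue⟩))

-- The positions of `j` are the four vertices of the cycle `k i q i'`; each step along an edge
-- changes the number of elements of `B` with `j` in that position by at most a fibre of `F`.
theorem IsSeparation.card_right_le_six
    (h : IsSeparation G (insert k (insert q {i, i'})) g A B F)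
    (hk : HasTwoNeighbors G (insert q {i, i'}) k i i') (hq : q ∉ ({i, i'} : Finset V))
    (hqi : G.Adj q i) (hqi' : G.Adj q i') (hF : #F ≤ 7)
    (hj : j ∈ (insert k (insert q {i, i'}) : Finset V).image g) (hFj : #(fiber F k j) ≤ 1)
    (hBj : #(fiber B k j) ≤ 0) : #B ≤ 6 := by
  have hik := h.card_fiber_le_of_adj (v := k) (by simp) (by simp) hk.adj_left.symm j
  have hi'k := h.card_fiber_le_of_adj (v := k) (by simp) (by simp) hk.adj_right.symm j
  have hqi := h.card_fiber_le_of_adj (by simp) (by simp) hqi j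
  have hqi' := h.card_fiber_le_of_adj (by simp) (by simp) hqi' j
  have hsumF := sum_card_fiber_apply_of_subset_block h.subset_block hj
  have hsumB := sum_card_fiber_apply_of_subset_block h.right_subset hj
  rw [sum_insert hk.notMem, sum_insert hq, sum_pair hk.ne] at hsumF hsumB
  lia

end FibersAtAValue

theorem CutBound.insert_of_hasTwoNeighbors_of_card_eq_three (hC : CutBound G X 1 0)
    (hX : TreeOn G X) (hG : G.CliqueFree 3) (h3 : #X = 3) (hk : HasTwoNeighbors G X k i i') :
    CutBound G (insert k X) 7 6 := by
  obtain ⟨q, hq, rfl, hqi, hqi'⟩ := hX.exists_common_neighbor_of_card_eq_three h3 hk.mem_left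
    hk.mem_right hk.ne (hk.not_adj hG)
  intro g A B F h hF
  obtain ⟨j, hj, hFj⟩ :
      ∃ j ∈ (insert k (insert q {i, i'}) : Finset V).image g, #(fiber F k j) < 2 := by
    refine exists_lt_of_sum_lt ?_
    rw [h.sum_card_fibers.1, sum_const, card_image_of_injective _ g.injective,
      card_insert_of_notMem hk.notMem, h3, smul_eq_mul]
    lia
  obtain ⟨p, hp⟩ := h.exists_fiber hk.notMem hj
  refine (hC p _ _ _ hp (Nat.lt_succ_iff.1 hFj)).imp (fun hA => ?_) fun hB => ?_
  · exact h.symm.card_right_le_six hk hq hqi hqi' hF hj (Nat.lt_succ_iff.1 hFj) hA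
  · exact h.card_right_le_six hk hq hqi hqi' hF hj (Nat.lt_succ_iff.1 hFj) hB

section Profiles

variable {ι : Type*} [DecidableEq ι] {J : Finset ι} {a α b : ι → ℕ} {j₀ : ι}

theorem SeparationProfile.sum_le_nine_or_sum_le_nine (h : SeparationProfile 3 1 3 J a α b)
    (hα : DoubleTransfer J a α) (hb : DoubleTransfer J a b) (hJ : #J = 5)
    (hsum : ∑ j ∈ J, a j ≤ 11) : ∑ j ∈ J, α j ≤ 9 ∨ ∑ j ∈ J, b j ≤ 9 := by
  have hslope : SlopeBound 3 1 3 3 1 := by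
    intro s f hs hf h
    unfold ExpansionBound at h
    interval_cases s <;> lia
  by_cases h3 : ∀ j ∈ J, a j ≤ 3
  · exact (h.sum_le_or_sum_le_of_forall_le (M := 3) h3 hsum hslope (by norm_num)
      (by rw [hJ]; decide)).imp (·.trans (by norm_num)) (·.trans (by norm_num))
  push Not at h3
  obtain ⟨j₀, hj₀, ha₀⟩ := h3
  have hadd₀ := add_sum_erase J a hj₀
  have hrest : ∑ j ∈ J.erase j₀, a j ≤ 7 := by lia
  by_cases h3 : ∀ j ∈ J.erase j₀, a j ≤ 3
  · refine (h.sum_erase_le_or_sum_erase_le (M := 2) hj₀ le_rfl h3 hrest hslope (by norm_num)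
      (by rw [hJ]; decide)).imp (fun hM => ?_) fun hM => ?_
    · have := hα.two_mul_sum_le hj₀ hrest hM
      lia
    · have := hb.two_mul_sum_le hj₀ hrest hM
      lia
  push Not at h3
  obtain ⟨j₁, hj₁, ha₁⟩ := h3
  have hadd₁ := add_sum_erase _ a hj₁
  have hrest : ∑ j ∈ (J.erase j₀).erase j₁, a j ≤ 3 := by lia
  have hcard : #((J.erase j₀).erase j₁) = 3 := by
    rw [card_erase_of_mem hj₁, card_erase_of_mem hj₀, hJ]
  refine (h.sum_le_or_sum_le (M := 1) ((erase_subset _ _).trans (erase_subset _ _)) le_rfl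
    (forall_le_of_sum_le hrest) hrest hslope (by norm_num)
    (by rw [hcard, hJ]; decide)).imp (fun hM => ?_) fun hM => ?_
  · exact hα.sum_le hj₀ hj₁ hrest hM
  · exact hb.sum_le hj₀ hj₁ hrest hM

theorem SideProfile.sum_le_six (h : SideProfile 4 J a b) (hb : DoubleTransfer J a b)
    (hj₀ : j₀ ∈ J) (hsum : ∑ j ∈ J.erase j₀, a j ≤ 7) (hle : ∑ j ∈ J.erase j₀, b j ≤ 3) :
    ∑ j ∈ J, b j ≤ 6 := by
  have hzero : ∀ j ∈ J.erase j₀, a j ≤ 3 → b j = 0 := by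
    intro j hj haj
    have hexp := h.expansion j (mem_of_mem_erase hj)
    have hbj := forall_le_of_sum_le hle j hj
    unfold ExpansionBound at hexp
    interval_cases b j <;> lia
  by_cases h3 : ∀ j ∈ J.erase j₀, a j ≤ 3
  · have := hb.two_mul_sum_le hj₀ hsum (sum_eq_zero fun j hj => hzero j hj (h3 j hj)).le
    lia
  · push Not at h3
    obtain ⟨j₁, hj₁, ha₁⟩ := h3
    have hadd := add_sum_erase _ a hj₁
    have hrest : ∑ j ∈ (J.erase j₀).erase j₁, a j ≤ 3 := by lia
    exact hb.sum_le hj₀ hj₁ hrest (sum_eq_zero fun j hj =>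
      hzero j (mem_of_mem_erase hj) (forall_le_of_sum_le hrest j hj)).le

theorem SeparationProfile.sum_le_six_or_sum_le_six (h : SeparationProfile 7 3 4 J a α b)
    (hα : DoubleTransfer J a α) (hb : DoubleTransfer J a b) (hJ : #J = 6)
    (hsum : ∑ j ∈ J, a j ≤ 15) : ∑ j ∈ J, α j ≤ 6 ∨ ∑ j ∈ J, b j ≤ 6 := by
  have hslope : SlopeBound 4 3 7 7 3 := by
    intro s f hs hf h
    unfold ExpansionBound at h
    interval_cases s <;> lia
  by_cases h7 : ∀ j ∈ J, a j ≤ 7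
  · exact h.sum_le_or_sum_le_of_forall_le h7 hsum hslope (by norm_num) (by rw [hJ]; decide)
  push Not at h7
  obtain ⟨j₀, hj₀, ha₀⟩ := h7
  have hadd := add_sum_erase J a hj₀
  have hrest : ∑ j ∈ J.erase j₀, a j ≤ 7 := by lia
  exact (h.sum_erase_le_or_sum_erase_le (M := 3) hj₀ le_rfl (forall_le_of_sum_le hrest) hrest
    hslope (by norm_num) (by rw [hJ]; decide)).imp (h.left.sum_le_six hα hj₀ hrest)
    (h.right.sum_le_six hb hj₀ hrest)

theorem SeparationProfile.sum_le_six_or_sum_le_six_of_five_le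
    (h : SeparationProfile (4 * d - 9) 4 d J a α b) (hα : DoubleTransfer J a α)
    (hb : DoubleTransfer J a b) (hd : 5 ≤ d) (hJ : #J = d + 2)
    (hsum : ∑ j ∈ J, a j ≤ 4 * (d + 2) - 9) : ∑ j ∈ J, α j ≤ 6 ∨ ∑ j ∈ J, b j ≤ 6 := by
  have hslope : SlopeBound d 4 (4 * d - 9) (4 * d - 9) 4 := by
    intro s f hs hf h
    unfold ExpansionBound at h
    interval_cases s <;> lia
  have hslope₁ : SlopeBound d 4 7 5 1 := by
    intro s f hs hf h
    unfold ExpansionBound at h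
    interval_cases s <;> lia
  have hfactorial : 24 ≤ (#J - 2).factorial := factorial_ge_of_five_le (n := #J - 1) (by lia)
  by_cases hN : ∀ j ∈ J, a j ≤ 4 * d - 9
  · exact h.sum_le_or_sum_le_of_forall_le hN hsum hslope (by lia)
      (lt_of_lt_of_le (by lia) (Nat.mul_le_mul_left _ hfactorial))
  push Not at hN
  obtain ⟨j₀, hj₀, ha₀⟩ := hN
  have hadd := add_sum_erase J a hj₀
  have hrest : ∑ j ∈ J.erase j₀, a j ≤ 7 := by lia
  refine (h.sum_erase_le_or_sum_erase_le (M := 1) hj₀ (by lia) (forall_le_of_sum_le hrest) hrest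
    hslope₁ (by norm_num) (lt_of_lt_of_le (by lia) (Nat.mul_le_mul_left _ hfactorial))).imp
    (fun hM => ?_) fun hM => ?_
  · have := hα.two_mul_sum_le hj₀ hrest hM
    lia
  · have := hb.two_mul_sum_le hj₀ hrest hM
    lia

end Profiles

theorem HasTwoNeighbors.cutBound_insert (hk : HasTwoNeighbors G X k i i') (hX : TreeOn G X)
    (hG : G.CliqueFree 3) (h4 : 4 ≤ #X)
    (hedges : #(edgeSwaps G (insert k X)) = #X + 1)
    (hL' : LocalExpansion G (insert k X) (#X + 1)) :
    CutBound G (insert k X) (4 * (#X + 1) - 9) 4 := by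
  have hL := hX.localExpansion
  obtain h4 | h5 | h6 : #X = 4 ∨ #X = 5 ∨ 6 ≤ #X := by lia
  · have hcard := card_insert_of_notMem hk.notMem
    rw [h4] at hL hedges hcard ⊢
    refine CutBound.of_lt_card_outerNeighbors (M := 9) ?_ fun R hR hR' =>
      twelve_le_card_outerNeighbors hG hcard.le hedges hR hR'
    refine (hX.cutBound_of_card_eq_four h4).of_profile_of_hasTwoNeighbors hL hk ?_
    exact fun J a α b hJ h hα hb => h.sum_le_nine_or_sum_le_nine hα hb (by rw [hJ, h4])
  · rw [h5] at hL hL' ⊢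
    refine CutBound.of_localExpansion ?_ hL' le_rfl
    refine (hX.cutBound_of_card_eq_five hG h5).of_profile_of_hasTwoNeighbors hL hk ?_
    exact fun J a α b hJ h hα hb => h.sum_le_six_or_sum_le_six hα hb (by rw [hJ, h5])
  · refine CutBound.of_localExpansion ?_ hL' (by lia)
    refine (hX.cutBound hG h6).of_profile_of_hasTwoNeighbors hL hk ?_
    intro J a α b hJ h hα hb hsum
    exact h.sum_le_six_or_sum_le_six_of_five_le hα hb (by lia) (by lia) (by lia)

theorem UnicyclicOn.cutBound_of_card_eq_four (hX : UnicyclicOn G X) (hG : G.CliqueFree 3)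
    (h4 : #X = 4) : CutBound G X 7 3 := by
  have hedges := hX.card_edgeSwaps
  refine CutBound.of_lt_card_outerNeighbors (M := 6) ?_ fun R hR hR' =>
    eight_le_card_outerNeighbors hG (by lia) (by lia) hR hR'
  cases hX with
  | insert_leaf hX hk _ _ _ =>
    have := hX.four_le_card hG
    rw [card_insert_of_notMem hk] at h4
    lia
  | close_cycle hX hk hi hi' hii' hki hki' _ =>
    rw [card_insert_of_notMem hk] at h4
    have h3 : _ = 3 := Nat.succ_injective h4
    exact (hX.cutBound_of_card_eq_three h3).insert_of_hasTwoNeighbors_of_card_eq_three hX hG h3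
      ⟨hk, hi, hi', hii', hki, hki'⟩

theorem UnicyclicOn.cutBound (hX : UnicyclicOn G X) (hG : G.CliqueFree 3) (h5 : 5 ≤ #X) :
    CutBound G X (4 * #X - 9) 4 := by
  induction hX with
  | @insert_leaf X k i hX hk hi hki huniq ih =>
    have hL := hX.localExpansion hG
    have hL' := (hX.insert_leaf hk hi hki huniq).localExpansion hG
    have h4 := hX.four_le_card hG
    rw [card_insert_of_notMem hk] at hL' ⊢
    obtain h4 | h5 : #X = 4 ∨ 5 ≤ #X := by lia
    · have hC := hX.cutBound_of_card_eq_four hG h4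
      rw [h4] at hL ⊢
      exact hC.insert_leaf_of_card_eq_four_or_five hL (Or.inl h4) hk hi hki
    · have hC := (ih h5).insert_leaf_of_five_le hL h5 le_rfl hk hi hki
      exact (hC.mono (by norm_num)).of_localExpansion hL' (by lia)
  | @close_cycle X k i i' hX hk hi hi' hii' hki hki' huniq =>
    have hY := UnicyclicOn.close_cycle hX hk hi hi' hii' hki hki' huniq
    have hedges := hY.card_edgeSwaps
    have hL' := hY.localExpansion hG
    rw [card_insert_of_notMem hk] at h5 hedges hL' ⊢
    exact HasTwoNeighbors.cutBound_insert ⟨hk, hi, hi', hii', hki, hki'⟩ hX hG (by lia) hedges hL'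

end UnicyclicCutBounds

theorem exists_adj_of_connected_of_ne_univ {V : Type*} [Fintype V] {G : SimpleGraph V}
    {X : Finset V} (hG : G.Connected) (hX : X.Nonempty) (hne : X ≠ univ) :
    ∃ k ∉ X, ∃ i ∈ X, G.Adj k i := by
  obtain ⟨i, hi⟩ := hX
  obtain ⟨k, -, hk⟩ := exists_of_ssubset (ssubset_univ_iff.2 hne)
  obtain ⟨p⟩ := hG.preconnected i k
  obtain ⟨d, -, hfst, hsnd⟩ := p.exists_boundary_dart X hi hk
  exact ⟨d.snd, hsnd, d.fst, hfst, d.adj.symm⟩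

/-! ### Cyclic cuts -/

section ConnectedGraphs

variable {V : Type*} [Fintype V] [DecidableEq V] {G : SimpleGraph V}

theorem univ_induction_of_connected {P : Finset V → Prop} (hG : G.Connected)
    (singleton : ∀ v, P {v})
    (insert : ∀ X k i, P X → k ∉ X → i ∈ X → G.Adj k i → P (insert k X)) : P univ := by
  classical
  obtain ⟨v⟩ := hG.nonempty
  obtain ⟨X, hX, hmax⟩ := exists_max_image {X : Finset V | P X ∧ X.Nonempty} card
    ⟨{v}, by simp [singleton v]⟩
  obtain ⟨-, hPX, hX⟩ := mem_filter.1 hX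
  by_cases hne : X = univ
  · exact hne ▸ hPX
  obtain ⟨k, hk, i, hi, hki⟩ := exists_adj_of_connected_of_ne_univ hG hX hne
  have hle := hmax (Insert.insert k X) (by simp [insert X k i hPX hk hi hki])
  rw [card_insert_of_notMem hk] at hle
  exact absurd hle (Nat.not_succ_le_self _)

variable [DecidableRel G.Adj] {X : Finset V} {k : V}

theorem TreeOn.insert_trichotomy (hX : TreeOn G X) (hk : k ∉ X) (hpos : 0 < #{i ∈ X | G.Adj k i}) :
    TreeOn G (insert k X) ∨ UnicyclicOn G (insert k X) ∨
      #(insert k X) < #(edgeSwaps G (insert k X)) := by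
  have hedges := hX.card_edgeSwaps
  have hmem {i : V} : i ∈ ({i ∈ X | G.Adj k i} : Finset V) ↔ i ∈ X ∧ G.Adj k i := mem_filter
  rw [card_insert_of_notMem hk, card_edgeSwaps_insert hk]
  obtain h1 | h2 | h3 : #{i ∈ X | G.Adj k i} = 1 ∨ #{i ∈ X | G.Adj k i} = 2 ∨
      3 ≤ #{i ∈ X | G.Adj k i} := by lia
  · obtain ⟨i, hi⟩ := card_eq_one.1 h1
    simp only [hi, mem_singleton] at hmem
    obtain ⟨hiX, hki⟩ := hmem.1 rfl
    exact Or.inl (hX.insert_leaf hk hiX hki fun j hj hkj => hmem.2 ⟨hj, hkj⟩)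
  · obtain ⟨i, i', hii', hi⟩ := card_eq_two.1 h2
    simp only [hi, mem_insert, mem_singleton] at hmem
    obtain ⟨hiX, hki⟩ := hmem.1 (Or.inl rfl)
    obtain ⟨hiX', hki'⟩ := hmem.1 (Or.inr rfl)
    exact Or.inr (Or.inl (.close_cycle hX hk hiX hiX' hii' hki hki'
      fun j hj hkj => hmem.2 ⟨hj, hkj⟩))
  · exact Or.inr (Or.inr (by lia))

theorem UnicyclicOn.insert_dichotomy (hX : UnicyclicOn G X) (hk : k ∉ X)
    (hpos : 0 < #{i ∈ X | G.Adj k i}) :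
    UnicyclicOn G (insert k X) ∨ #(insert k X) < #(edgeSwaps G (insert k X)) := by
  have hedges := hX.card_edgeSwaps
  rw [card_insert_of_notMem hk, card_edgeSwaps_insert hk]
  obtain h1 | h2 : #{i ∈ X | G.Adj k i} = 1 ∨ 2 ≤ #{i ∈ X | G.Adj k i} := by lia
  · obtain ⟨i, hi⟩ := card_eq_one.1 h1
    have hmem {j : V} : j ∈ X ∧ G.Adj k j ↔ j = i := by
      rw [← mem_filter (s := X) (p := fun j => G.Adj k j), hi, mem_singleton]
    obtain ⟨hiX, hki⟩ := hmem.2 rfl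
    exact Or.inl (hX.insert_leaf hk hiX hki fun j hj hkj => hmem.1 ⟨hj, hkj⟩)
  · exact Or.inr (by lia)

theorem treeOn_or_unicyclicOn_or_card_lt_of_connected (hG : G.Connected) :
    TreeOn G univ ∨ UnicyclicOn G univ ∨ #(univ : Finset V) < #(edgeSwaps G univ) := by
  refine univ_induction_of_connected (P := fun X => TreeOn G X ∨ UnicyclicOn G X ∨
    #X < #(edgeSwaps G X)) hG (fun v => Or.inl (.singleton v)) ?_
  intro X k i hX hk hi hki
  have hpos : 0 < #{j ∈ X | G.Adj k j} := card_pos.2 ⟨i, mem_filter.2 ⟨hi, hki⟩⟩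
  obtain hX | hX | hlt := hX
  · exact hX.insert_trichotomy hk hpos
  · exact Or.inr (hX.insert_dichotomy hk hpos)
  · rw [card_insert_of_notMem hk, card_edgeSwaps_insert hk]
    exact Or.inr (Or.inr (by lia))

theorem card_edgeSwaps_univ : #(edgeSwaps G univ) = G.edgeSet.ncard := by
  let edgeSwap : Sym2 V → Perm V := Sym2.lift ⟨swap, swap_comm⟩
  have hinj : Set.InjOn edgeSwap G.edgeSet := by
    intro e he f hf h
    induction e with | _ a b
    induction f with | _ c d
    have hcd : swap a b c = d := by rw [show swap a b = swap c d from h, swap_apply_left]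
    by_cases hca : c = a
    · subst hca
      rw [← hcd, swap_apply_left]
    by_cases hcb : c = b
    · subst hcb
      rw [← hcd, swap_apply_right, Sym2.eq_swap]
    · rw [swap_apply_of_ne_of_ne hca hcb] at hcd
      exact absurd hcd (SimpleGraph.Adj.ne hf)
  have himage : (edgeSwaps G univ : Set (Perm V)) = edgeSwap '' G.edgeSet := by
    ext t
    rw [mem_coe, mem_edgeSwaps]
    constructor
    · rintro ⟨a, -, b, -, hab, rfl⟩
      exact ⟨s(a, b), hab, rfl⟩
    · rintro ⟨e, he, rfl⟩
      induction e with | _ a b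
      exact ⟨a, mem_univ _, b, mem_univ _, he, rfl⟩
  rw [← Set.ncard_coe_finset, himage, hinj.ncard_image]

end ConnectedGraphs

theorem unicyclicOn_univ_of_connected {V : Type*} [Fintype V] [DecidableEq V] {G : SimpleGraph V}
    (hG : G.Connected) (hcard : G.edgeSet.ncard = Fintype.card V) : UnicyclicOn G univ := by
  classical
  have hedges := card_edgeSwaps_univ.trans hcard
  rw [← card_univ] at hedges
  obtain hX | hX | hlt := treeOn_or_unicyclicOn_or_card_lt_of_connected hG
  · exact absurd hX.card_edgeSwaps (by lia)
  · exact hX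
  · exact absurd hedges hlt.ne'

section LowerBound

variable {V : Type*} [Fintype V] [DecidableEq V] {G : SimpleGraph V} [DecidableRel G.Adj]
  {X : Finset V} {g : Perm V} {A B F R S : Finset (Perm V)}

theorem two_mul_card_edgeSwaps_le_card_jointNeighbors_add_two (hG : G.CliqueFree 3)
    (hS : 2 ≤ #S) : 2 * #(edgeSwaps G X) ≤ #(jointNeighbors G X S) + 2 := by
  obtain ⟨x, hx, y, hy, hxy⟩ := one_lt_card.1 hS
  have hunion : neighbors G X x ∪ neighbors G X y ⊆ jointNeighbors G X S :=
    union_subset (subset_biUnion_of_mem _ hx) (subset_biUnion_of_mem _ hy)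
  have hcard := card_union_add_card_inter (neighbors G X x) (neighbors G X y)
  have hinter := card_inter_neighbors_le_two (X := X) hG hxy
  have hle := card_le_card hunion
  rw [card_neighbors, card_neighbors] at hcard
  lia

theorem four_mul_card_edgeSwaps_le_card_outerNeighbors_add_eight (hG : G.CliqueFree 3)
    (hR : #R ≤ 4) (hsign : ∀ e, 2 ≤ #(signClass R e)) :
    4 * #(edgeSwaps G X) ≤ #(outerNeighbors G X R) + 8 := by
  have hsplit := card_sdiff_add_card_sdiff_le_card_outerNeighbors (G := G) (X := X) (R := R)
    (e := 1)
  have hcard := card_signClass_add_card_signClass_neg R 1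
  have hpos := two_mul_card_edgeSwaps_le_card_jointNeighbors_add_two (X := X) hG (hsign 1)
  have hneg := two_mul_card_edgeSwaps_le_card_jointNeighbors_add_two (X := X) hG (hsign (-1))
  have hpos' := le_card_sdiff (signClass R (-1)) (jointNeighbors G X (signClass R 1))
  have hneg' := le_card_sdiff (signClass R 1) (jointNeighbors G X (signClass R (-1)))
  lia

theorem UnicyclicOn.cutBound_four (hX : UnicyclicOn G X) (hG : G.CliqueFree 3) :
    CutBound G X (4 * #X - 9) 4 := by
  obtain h4 | h5 := (hX.four_le_card hG).eq_or_lt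
  · rw [← h4]
    exact (hX.cutBound_of_card_eq_four hG h4.symm).mono (by norm_num)
  · exact hX.cutBound hG h5

theorem UnicyclicOn.four_mul_card_sub_eight_le_of_isSeparation (hX : UnicyclicOn G X)
    (hG : G.CliqueFree 3) (h : IsSeparation G X g A B F) (hA : ∀ e, 2 ≤ #(signClass A e))
    (hB : ∀ e, 2 ≤ #(signClass B e)) : 4 * #X - 8 ≤ #F := by
  have hpart {A B : Finset (Perm V)} (h : IsSeparation G X g A B F) (hcard : #B ≤ 4)
      (hB : ∀ e, 2 ≤ #(signClass B e)) : 4 * #X - 8 ≤ #F := by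
    have hle := four_mul_card_edgeSwaps_le_card_outerNeighbors_add_eight (X := X) hG hcard hB
    rw [hX.card_edgeSwaps] at hle
    have := card_le_card h.outerNeighbors_subset
    lia
  by_contra! hlt
  obtain hcard | hcard := hX.cutBound_four hG g A B F h (by lia)
  · exact hlt.not_ge (hpart h.symm hcard hA)
  · exact hlt.not_ge (hpart h hcard hB)

end LowerBound

section CyclicCuts

variable {W : Type*} {H : SimpleGraph W} {A F : Set W}

theorem not_isAcyclic_induce_iff : ¬(H.induce A).IsAcyclic ↔
    ∃ u, ∃ p : H.Walk u u, p.IsCycle ∧ ∀ x ∈ p.support, x ∈ A := by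
  constructor
  · intro h
    unfold SimpleGraph.IsAcyclic at h
    push Not at h
    obtain ⟨u, p, hp⟩ := h
    refine ⟨u, p.map (SimpleGraph.Embedding.induce A).toHom, hp.map Subtype.val_injective, ?_⟩
    intro x hx
    obtain ⟨y, -, rfl⟩ := List.mem_map.1 (p.support_map _ ▸ hx)
    exact y.2
  · rintro ⟨u, p, hp, hpA⟩ hacyclic
    refine hacyclic (p.induce A hpA) (.of_map (f := (SimpleGraph.Embedding.induce A).toHom) ?_)
    rwa [SimpleGraph.Walk.map_induce]

theorem not_isAcyclic_induce_mono {B : Set W} (hAB : A ⊆ B) (hA : ¬(H.induce A).IsAcyclic) :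
    ¬(H.induce B).IsAcyclic := by
  obtain ⟨u, p, hp, hpA⟩ := not_isAcyclic_induce_iff.1 hA
  exact not_isAcyclic_induce_iff.2 ⟨u, p, hp, fun x hx => hAB (hpA x hx)⟩

theorem not_isAcyclic_induce_insert_four {a b c d : W} (hab : H.Adj a b) (hbc : H.Adj b c)
    (hcd : H.Adj c d) (hda : H.Adj d a) (hac : a ≠ c) (hbd : b ≠ d) :
    ¬(H.induce {a, b, c, d}).IsAcyclic := by
  refine not_isAcyclic_induce_iff.2 ⟨a, .cons hab (.cons hbc (.cons hcd (.cons hda .nil))), ?_, ?_⟩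
  · have hpath : (SimpleGraph.Walk.cons hbc (.cons hcd (.cons hda .nil))).IsPath := by
      simp [hbc.ne, hcd.ne, hda.ne, hbd, hab.ne.symm, hac.symm]
    refine (SimpleGraph.Walk.cons_isCycle_iff _ hab).2 ⟨hpath, ?_⟩
    simp [hab.ne, hac, hbd, hda.ne.symm]
  · simp only [SimpleGraph.Walk.support_cons, SimpleGraph.Walk.support_nil, List.mem_cons,
      List.not_mem_nil, or_false]
    rintro x (rfl | rfl | rfl | rfl | rfl) <;> simp

theorem not_reachable_of_forall_not_adj {B : Set W} (hAB : A ∪ B = Fᶜ)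
    (hadj : ∀ a ∈ A, ∀ b ∈ B, ¬H.Adj a b) {u v : (Fᶜ : Set W)} (hu : ↑u ∈ A) (hv : ↑v ∉ A) :
    ¬(H.induce Fᶜ).Reachable u v := by
  rintro ⟨p⟩
  obtain ⟨d, -, hfst, hsnd⟩ := p.exists_boundary_dart (Subtype.val ⁻¹' A) hu hv
  have hsnd' : ↑d.snd ∈ A ∪ B := hAB.ge d.snd.2
  exact hadj _ hfst _ (hsnd'.resolve_left hsnd) d.adj

theorem exists_isCycle_induce_of_subset (hA : ¬(H.induce A).IsAcyclic) (hAF : A ⊆ Fᶜ) :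
    ∃ u : (Fᶜ : Set W), ↑u ∈ A ∧ ∃ p : (H.induce Fᶜ).Walk u u, p.IsCycle := by
  obtain ⟨u, p, hp, hpA⟩ := not_isAcyclic_induce_iff.1 hA
  refine ⟨_, hpA _ p.start_mem_support, p.induce Fᶜ fun x hx => hAF (hpA x hx), ?_⟩
  refine .of_map (f := (SimpleGraph.Embedding.induce Fᶜ).toHom) ?_
  rwa [SimpleGraph.Walk.map_induce]

theorem not_isAcyclic_induce_of_isCycle_of_reachable {v : (Fᶜ : Set W)}
    {p : (H.induce Fᶜ).Walk v v} (hp : p.IsCycle)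
    (h : ∀ u, (H.induce Fᶜ).Reachable v u → ↑u ∈ A) : ¬(H.induce A).IsAcyclic := by
  refine not_isAcyclic_induce_iff.2 ⟨v, p.map (SimpleGraph.Embedding.induce Fᶜ).toHom,
    hp.map Subtype.val_injective, fun x hx => ?_⟩
  obtain ⟨u, hu, rfl⟩ := List.mem_map.1 (p.support_map _ ▸ hx)
  classical exact h u (p.takeUntil u hu).reachable

theorem cyclicCut_iff : CyclicCut H F ↔ ∃ A B : Set W, Disjoint A B ∧ A ∪ B = Fᶜ ∧
    (∀ a ∈ A, ∀ b ∈ B, ¬H.Adj a b) ∧ ¬(H.induce A).IsAcyclic ∧ ¬(H.induce B).IsAcyclic := by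
  constructor
  · rintro ⟨-, C₁, C₂, hC, ⟨v₁, rfl, p₁, hp₁⟩, v₂, rfl, p₂, hp₂⟩
    have hmem (u : (Fᶜ : Set W)) : ↑u ∈ Subtype.val '' {u | (H.induce Fᶜ).Reachable v₁ u} ↔
        (H.induce Fᶜ).Reachable v₁ u :=
      Subtype.val_injective.mem_set_image
    refine ⟨Subtype.val '' {u | (H.induce Fᶜ).Reachable v₁ u},
      Fᶜ \ (Subtype.val '' {u | (H.induce Fᶜ).Reachable v₁ u}), Set.disjoint_sdiff_right,
      Set.union_sdiff_cancel (Subtype.coe_image_subset _ _), ?_, ?_, ?_⟩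
    · rintro _ ⟨a, ha, rfl⟩ b ⟨hbF, hb⟩ hab
      have hab' : (H.induce Fᶜ).Adj a ⟨b, hbF⟩ := hab
      exact hb ((hmem ⟨b, hbF⟩).2 (ha.trans hab'.reachable))
    · exact not_isAcyclic_induce_of_isCycle_of_reachable hp₁ fun u hu => (hmem u).2 hu
    · refine not_isAcyclic_induce_of_isCycle_of_reachable hp₂ fun u hu => ⟨u.2, fun hu₁ => hC ?_⟩
      exact SimpleGraph.ConnectedComponent.sound (((hmem u).1 hu₁).trans hu.symm)
  · rintro ⟨A, B, hdisj, hAB, hadj, hA, hB⟩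
    obtain ⟨u, huA, hu⟩ := exists_isCycle_induce_of_subset hA (hAB ▸ Set.subset_union_left)
    obtain ⟨v, hvB, hv⟩ := exists_isCycle_induce_of_subset hB (hAB ▸ Set.subset_union_right)
    have huv := not_reachable_of_forall_not_adj hAB hadj huA (hdisj.notMem_of_mem_right hvB)
    exact ⟨fun h => huv (h u v), _, _, fun h => huv (SimpleGraph.ConnectedComponent.exact h),
      ⟨u, rfl, hu⟩, v, rfl, hv⟩

end CyclicCuts

section EdgeSwapGraph

variable {V : Type*} [DecidableEq V] {G : SimpleGraph V}

/-- The Cayley graph of `Sym(V)` generated by the transpositions along the edges of `G`. -/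
def edgeSwapGraph (G : SimpleGraph V) : SimpleGraph (Perm V) where
  Adj x y := ∃ a b, G.Adj a b ∧ x * swap a b = y
  symm := ⟨by
    rintro x _ ⟨a, b, hab, rfl⟩
    exact ⟨a, b, hab, by rw [mul_assoc, swap_mul_self, mul_one]⟩⟩
  loopless := ⟨by
    rintro x ⟨a, b, hab, h⟩
    exact hab.ne (swap_eq_one_iff.1 (mul_eq_left.1 h))⟩

theorem edgeSwapGraph_adj_mul_swap (x : Perm V) {a b : V} (hab : G.Adj a b) :
    (edgeSwapGraph G).Adj x (x * swap a b) :=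
  ⟨a, b, hab, rfl⟩

theorem cayley_eq_edgeSwapGraph {n : ℕ} {T : Set (Perm (Fin n))} (hT : IsTranspositionSet T) :
    cayley T = edgeSwapGraph (transGraph T) := by
  have hadj (a b : Fin n) : (transGraph T).Adj a b ↔ a ≠ b ∧ swap a b ∈ T := by
    rw [transGraph, SimpleGraph.fromRel_adj, swap_comm b a, or_self]
  have hinv (x y : Perm (Fin n)) (h : x⁻¹ * y ∈ T) : (edgeSwapGraph (transGraph T)).Adj x y := by
    obtain ⟨a, b, hab, hxy⟩ := hT _ h
    exact ⟨a, b, (hadj a b).2 ⟨hab, hxy ▸ h⟩, by rw [← hxy, mul_inv_cancel_left]⟩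
  ext x y
  rw [cayley, SimpleGraph.fromRel_adj]
  constructor
  · rintro ⟨-, h | h⟩
    exacts [hinv x y h, (hinv y x h).symm]
  · intro h
    refine ⟨h.ne, .inl ?_⟩
    obtain ⟨a, b, hab, rfl⟩ := h
    rw [inv_mul_cancel_left]
    exact ((hadj a b).1 hab).2

section Parity

variable [Fintype V] {A : Finset (Perm V)} {x y : Perm V}

theorem sign_of_edgeSwapGraph_adj (h : (edgeSwapGraph G).Adj x y) :
    Perm.sign y = -Perm.sign x := by
  obtain ⟨a, b, hab, rfl⟩ := h
  rw [map_mul, Perm.sign_swap hab.ne, mul_neg_one]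

theorem sign_getVert (p : (edgeSwapGraph G).Walk x y) {i : ℕ} (hi : i ≤ p.length) :
    Perm.sign (p.getVert i) = (-1) ^ i * Perm.sign x := by
  induction i with
  | zero => rw [p.getVert_zero, pow_zero, one_mul]
  | succ i ih =>
    rw [sign_of_edgeSwapGraph_adj (p.adj_getVert_succ hi), ih (by lia), pow_succ, mul_neg_one,
      neg_mul]

theorem two_le_card_signClass (h : ¬((edgeSwapGraph G).induce (A : Set (Perm V))).IsAcyclic)
    (e : ℤˣ) : 2 ≤ #(signClass A e) := by
  obtain ⟨x, p, hp, hpA⟩ := not_isAcyclic_induce_iff.1 h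
  have hlength : 4 ≤ p.length := by
    have heven : Even p.length := by
      by_contra hodd
      have h := sign_getVert p le_rfl
      rw [p.getVert_length, (Nat.not_even_iff_odd.1 hodd).neg_one_pow, neg_one_mul] at h
      exact units_ne_neg_self _ h
    obtain ⟨k, hk⟩ := heven
    have := hp.three_le_length
    lia
  have hmem {i : ℕ} (hi : i ≤ p.length) (he : (-1) ^ i * Perm.sign x = e) :
      p.getVert i ∈ signClass A e :=
    mem_filter.2 ⟨hpA _ (p.getVert_mem_support i), (sign_getVert p hi).trans he⟩
  obtain ⟨i, hi, he⟩ : ∃ i ≤ 1, (-1) ^ i * Perm.sign x = e := by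
    rcases eq_or_ne (Perm.sign x) e with h | h
    · exact ⟨0, zero_le_one, by rw [pow_zero, one_mul, h]⟩
    · exact ⟨1, le_rfl, by rw [pow_one, neg_one_mul, Int.units_ne_iff_eq_neg.1 h, neg_neg]⟩
  refine one_lt_card.2 ⟨_, hmem (i := i) (by lia) he, _, hmem (i := i + 2) (by lia) ?_, fun h => ?_⟩
  · rwa [pow_add, neg_one_sq, mul_one]
  · have := hp.getVert_injOn' (by simp; lia) (by simp; lia) h
    lia

end Parity

section LowerBound

variable [Fintype V] {F : Set (Perm V)} {x y : Perm V}

theorem edgeSwapGraph_adj_iff_mem_neighbors [DecidableRel G.Adj] :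
    (edgeSwapGraph G).Adj x y ↔ y ∈ neighbors G univ x := by
  rw [mem_neighbors]
  constructor
  · rintro ⟨a, b, hab, rfl⟩
    rw [inv_mul_cancel_left]
    exact swap_mem_edgeSwaps (mem_univ a) (mem_univ b) hab
  · intro h
    obtain ⟨a, -, b, -, hab, h⟩ := mem_edgeSwaps.1 h
    exact ⟨a, b, hab, by rw [← h, mul_inv_cancel_left]⟩

theorem UnicyclicOn.four_mul_card_sub_eight_le_of_cyclicCut (hG : G.CliqueFree 3)
    (hX : UnicyclicOn G univ) (hF : CyclicCut (edgeSwapGraph G) F) :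
    4 * Fintype.card V - 8 ≤ F.ncard := by
  classical
  obtain ⟨A, B, hdisj, hAB, hadj, hA, hB⟩ := cyclicCut_iff.1 hF
  obtain ⟨A, rfl⟩ := A.toFinite.exists_finset_coe
  obtain ⟨B, rfl⟩ := B.toFinite.exists_finset_coe
  have hsep : IsSeparation G univ 1 A B (A ∪ B)ᶜ :=
    { left_subset := fun _ _ => by simp [mem_block]
      right_subset := fun _ _ => by simp [mem_block]
      disjoint := disjoint_coe.1 hdisj
      eq_sdiff := by ext; simp [mem_block]
      disjoint_jointNeighbors := disjoint_left.2 fun b hb hbB => by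
        obtain ⟨a, ha, hab⟩ := mem_jointNeighbors.1 hb
        exact hadj a ha b hbB (edgeSwapGraph_adj_iff_mem_neighbors.2 hab) }
  have h := hX.four_mul_card_sub_eight_le_of_isSeparation hG hsep (two_le_card_signClass hA)
    (two_le_card_signClass hB)
  rwa [card_univ, ← Set.ncard_coe_finset (A ∪ B)ᶜ, coe_compl, coe_union, hAB, compl_compl] at h

end LowerBound

end EdgeSwapGraph

/-! ### A minimum cyclic cut -/

section DisjointEdges

variable {V : Type*} {G : SimpleGraph V} {X : Finset V} {p q r s : V}

/-- Two edges `pq` and `rs` of `G` without a common end. Their transpositions commute and span the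
4-cycles of the Cayley graph that a minimum cyclic cut isolates. -/
structure DisjointEdges (G : SimpleGraph V) (p q r s : V) : Prop where
  adj_left : G.Adj p q
  adj_right : G.Adj r s
  nodup : [p, q, r, s].Nodup

variable [DecidableEq V]

theorem TreeOn.exists_adj (hX : TreeOn G X) (hcard : 2 ≤ #X) : ∀ x ∈ X, ∃ y ∈ X, G.Adj x y := by
  induction hX with
  | singleton v => simp at hcard
  | @insert_leaf X k i _ _ hi hki _ ih =>
    intro x hx
    rcases mem_insert.1 hx with rfl | hx
    · exact ⟨i, mem_insert_of_mem hi, hki⟩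
    rcases eq_or_ne x i with rfl | hxi
    · exact ⟨k, mem_insert_self k X, hki.symm⟩
    · obtain ⟨y, hy, hxy⟩ := ih (one_lt_card.2 ⟨x, hx, i, hi, hxi⟩) x hx
      exact ⟨y, mem_insert_of_mem hy, hxy⟩

theorem UnicyclicOn.exists_disjointEdges (hG : G.CliqueFree 3) (hX : UnicyclicOn G X) :
    ∃ p q r s, DisjointEdges G p q r s := by
  induction hX with
  | insert_leaf _ _ _ _ _ ih => exact ih
  | @close_cycle X k i i' hX hk hi hi' hii' hki hki' _ =>
    obtain ⟨j, hj, hij⟩ := hX.exists_adj (one_lt_card.2 ⟨i, hi, i', hi', hii'⟩) i hi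
    have hji' : j ≠ i' := fun h => not_adj_of_cliqueFree_three hG hki hki' (h ▸ hij)
    have hkj : j ≠ k := fun h => hk (h ▸ hj)
    refine ⟨i, j, k, i', hij, hki', ?_⟩
    simp [hij.ne, hki.ne.symm, hii', hkj, hji', hki'.ne]

theorem DisjointEdges.swap_mul_swap_comm (h : DisjointEdges G p q r s) :
    Commute (swap p q) (swap r s) :=
  (Perm.disjoint_swap_swap h.nodup).commute

theorem DisjointEdges.swap_ne_swap (h : DisjointEdges G p q r s) : swap p q ≠ swap r s := by
  obtain ⟨⟨hpq, hpr, hps⟩, -⟩ := by simpa using h.nodup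
  intro heq
  have := congrArg (· p) heq
  simp only [swap_apply_left, swap_apply_of_ne_of_ne hpr hps] at this
  exact hpq this.symm

end DisjointEdges

section Squares

variable {M : Type*} [Group M] [DecidableEq M] {a b x y : M}

/-- The vertices of the 4-cycle through `x` in the Cayley graph of `M` with generators `a` and `b`,
when these are commuting involutions. -/
def square (a b x : M) : Finset M := {x, x * a, x * a * b, x * b}

theorem coe_square : (square a b x : Set M) = {x, x * a, x * a * b, x * b} := by
  simp only [square, coe_insert, coe_singleton]

theorem mul_left_mem_square (hab : Commute a b) (ha : a * a = 1) (hy : y ∈ square a b x) :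
    y * a ∈ square a b x := by
  simp only [square, mem_insert, mem_singleton] at hy ⊢
  rcases hy with rfl | rfl | rfl | rfl
  · simp
  · simp [mul_assoc, ha]
  · simp [mul_assoc, ← hab.eq, ← mul_assoc a a, ha]
  · simp [mul_assoc, hab.eq]

theorem mul_right_mem_square (hb : b * b = 1) (hy : y ∈ square a b x) :
    y * b ∈ square a b x := by
  simp only [square, mem_insert, mem_singleton] at hy ⊢
  rcases hy with rfl | rfl | rfl | rfl
  · simp
  · simp
  · simp [mul_assoc, hb]
  · simp [mul_assoc, hb]

end Squares

section UpperBound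

variable {V : Type*} [Fintype V] [DecidableEq V] {G : SimpleGraph V}
  {p q r s : V} {x y z : Perm V} {R S : Finset (Perm V)}

theorem DisjointEdges.not_isAcyclic_induce_square (h : DisjointEdges G p q r s) (x : Perm V) :
    ¬((edgeSwapGraph G).induce (square (swap p q) (swap r s) x : Set (Perm V))).IsAcyclic := by
  have hclose : x * swap p q * swap r s = x * swap r s * swap p q := by
    rw [mul_assoc, h.swap_mul_swap_comm.eq, mul_assoc]
  have hne : x ≠ x * swap p q * swap r s := fun heq => h.swap_ne_swap <| by
    rw [mul_assoc, left_eq_mul, mul_eq_one_iff_eq_inv, swap_inv] at heq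
    exact heq
  rw [coe_square]
  exact not_isAcyclic_induce_insert_four (edgeSwapGraph_adj_mul_swap x h.adj_left)
    (edgeSwapGraph_adj_mul_swap _ h.adj_right)
    (hclose ▸ (edgeSwapGraph_adj_mul_swap _ h.adj_left).symm)
    (edgeSwapGraph_adj_mul_swap x h.adj_right).symm hne
    (mul_right_injective x |>.ne h.swap_ne_swap)

theorem DisjointEdges.apply_mem_of_mem_square (h : DisjointEdges G p q r s)
    (hy : y ∈ square (swap p q) (swap r s) x) :
    (∀ v ∈ [p, q], y v ∈ [x p, x q]) ∧ ∀ v ∈ [r, s], y v ∈ [x r, x s] := by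
  obtain ⟨⟨-, hpr, hps⟩, ⟨hqr, hqs⟩, -⟩ := by simpa using h.nodup
  simp only [square, mem_insert, mem_singleton] at hy
  rcases hy with rfl | rfl | rfl | rfl <;>
    simp [swap_apply_of_ne_of_ne, hpr, hps, hqr, hqs, Ne.symm hpr, Ne.symm hps, Ne.symm hqr,
      Ne.symm hqs]

theorem DisjointEdges.apply_ne_of_mem_square (h : DisjointEdges G p q r s)
    (hy : y ∈ square (swap p q) (swap r s) 1)
    (hz : z ∈ square (swap p q) (swap r s) (swap p r * swap q s)) :
    ∀ v ∈ [p, q, r, s], y v ≠ z v := by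
  have hdisj : [p, q].Disjoint [r, s] := List.disjoint_of_nodup_append (l₁ := [p, q]) h.nodup
  have hexchange : swap p r (swap q s p) = r ∧ swap p r (swap q s q) = s ∧
      swap p r (swap q s r) = p ∧ swap p r (swap q s s) = q := by
    obtain ⟨⟨hpq, -, hps⟩, ⟨hqr, -⟩, hrs⟩ := by simpa using h.nodup
    simp [swap_apply_of_ne_of_ne, hpq, hps, hqr, hrs, Ne.symm hpq, Ne.symm hps, Ne.symm hqr,
      Ne.symm hrs]
  obtain ⟨hy₁, hy₂⟩ := h.apply_mem_of_mem_square hy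
  obtain ⟨hz₁, hz₂⟩ := h.apply_mem_of_mem_square hz
  simp only [Perm.one_apply, Perm.mul_apply, hexchange] at hy₁ hy₂ hz₁ hz₂
  intro v hv hyz
  rcases List.mem_append.1 (show v ∈ [p, q] ++ [r, s] from hv) with hv | hv
  · exact hdisj (hy₁ v hv) (hyz ▸ hz₁ v hv)
  · exact hdisj (hyz ▸ hz₂ v hv) (hy₂ v hv)

variable [DecidableRel G.Adj]

theorem card_outerNeighbors_le {X : Finset V} {m : ℕ}
    (hR : ∀ y ∈ R, m ≤ #(neighbors G X y ∩ R)) :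
    #(outerNeighbors G X R) ≤ #R * (#(edgeSwaps G X) - m) := by
  have hsub : outerNeighbors G X R ⊆ R.biUnion fun y => neighbors G X y \ R := fun z hz => by
    obtain ⟨⟨y, hy, hyz⟩, hzR⟩ := mem_outerNeighbors.1 hz
    exact mem_biUnion.2 ⟨y, hy, mem_sdiff.2 ⟨hyz, hzR⟩⟩
  refine (card_le_card hsub).trans (card_biUnion_le_card_mul _ _ _ fun y hy => ?_)
  rw [card_sdiff, inter_comm, card_neighbors]
  exact Nat.sub_le_sub_left (hR y hy) _

theorem card_filter_apply_ne_le_two (h : z ∈ neighbors G univ y) : #{v | y v ≠ z v} ≤ 2 := by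
  obtain ⟨a, b, -, rfl⟩ := edgeSwapGraph_adj_iff_mem_neighbors.2 h
  refine (card_le_card fun v hv => ?_).trans (card_le_two (a := a) (b := b))
  by_contra hv'
  simp only [mem_insert, mem_singleton, not_or] at hv'
  exact (mem_filter.1 hv).2 (by rw [Perm.mul_apply, swap_apply_of_ne_of_ne hv'.1 hv'.2])

theorem cyclicCut_coe_outerNeighbors
    (hR : ¬((edgeSwapGraph G).induce (R : Set (Perm V))).IsAcyclic)
    (hS : ¬((edgeSwapGraph G).induce (S : Set (Perm V))).IsAcyclic)
    (hdisj : Disjoint S R) (hsep : Disjoint S (jointNeighbors G univ R)) :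
    CyclicCut (edgeSwapGraph G) (outerNeighbors G univ R : Set (Perm V)) := by
  refine cyclicCut_iff.2 ⟨R, (R ∪ jointNeighbors G univ R : Set (Perm V))ᶜ, ?_, ?_, ?_, hR, ?_⟩
  · exact Set.disjoint_compl_right_iff_subset.2 Set.subset_union_left
  · ext z
    simp only [outerNeighbors, coe_sdiff, Set.mem_union, Set.mem_compl_iff, Set.mem_sdiff]
    tauto
  · exact fun y hy z hz hyz => hz (.inr (mem_jointNeighbors.2
      ⟨y, hy, edgeSwapGraph_adj_iff_mem_neighbors.1 hyz⟩))
  · refine not_isAcyclic_induce_mono (fun z hz hz' => ?_) hS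
    exact hz'.elim (disjoint_left.1 hdisj hz) (disjoint_left.1 hsep hz)

namespace DisjointEdges

theorem two_le_card_neighbors_inter_square (h : DisjointEdges G p q r s)
    (hy : y ∈ square (swap p q) (swap r s) x) :
    2 ≤ #(neighbors G univ y ∩ square (swap p q) (swap r s) x) := by
  have hleft := mul_mem_neighbors (x := y)
    (swap_mem_edgeSwaps (mem_univ p) (mem_univ q) h.adj_left)
  have hright := mul_mem_neighbors (x := y)
    (swap_mem_edgeSwaps (mem_univ r) (mem_univ s) h.adj_right)
  exact one_lt_card.2 ⟨_, mem_inter.2 ⟨hleft, mul_left_mem_square h.swap_mul_swap_comm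
    (swap_mul_self p q) hy⟩, _, mem_inter.2 ⟨hright, mul_right_mem_square (swap_mul_self r s) hy⟩,
    mul_right_injective y |>.ne h.swap_ne_swap⟩

theorem card_outerNeighbors_square_le (h : DisjointEdges G p q r s) (x : Perm V) :
    #(outerNeighbors G univ (square (swap p q) (swap r s) x)) ≤
      4 * (#(edgeSwaps G univ) - 2) :=
  (card_outerNeighbors_le fun _ hy => h.two_le_card_neighbors_inter_square hy).trans
    (Nat.mul_le_mul_right _ card_le_four)

theorem cyclicCut_outerNeighbors_square (h : DisjointEdges G p q r s) :
    CyclicCut (edgeSwapGraph G)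
      (outerNeighbors G univ (square (swap p q) (swap r s) 1) : Set (Perm V)) := by
  refine cyclicCut_coe_outerNeighbors (h.not_isAcyclic_induce_square 1)
    (h.not_isAcyclic_induce_square (swap p r * swap q s)) ?_ ?_
  · exact disjoint_left.2 fun z hz hzR => h.apply_ne_of_mem_square hzR hz p (by simp) rfl
  · refine disjoint_left.2 fun z hz hzN => ?_
    obtain ⟨y, hy, hyz⟩ := mem_jointNeighbors.1 hzN
    have hsub : [p, q, r, s].toFinset ⊆ ({v | y v ≠ z v} : Finset V) := fun v hv =>
      mem_filter.2 ⟨mem_univ v, h.apply_ne_of_mem_square hy hz v (List.mem_toFinset.1 hv)⟩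
    have hfour := (card_le_card hsub).trans (card_filter_apply_ne_le_two hyz)
    rw [List.toFinset_card_of_nodup h.nodup] at hfour
    simp at hfour

end DisjointEdges

end UpperBound

end TranspositionCayley

open TranspositionCayley in
theorem stmt_19_general {V : Type*} [Fintype V] [DecidableEq V] (G : SimpleGraph V)
    (huni : IsUnicyclic G) (htri : G.CliqueFree 3) :
    IsLeast {k : ℕ | ∃ F : Set (Equiv.Perm V),
      F.ncard = k ∧ CyclicCut (edgeSwapGraph G) F} (4 * Fintype.card V - 8) := by
  classical
  have hunivUnicyclic := unicyclicOn_univ_of_connected huni.1 huni.2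
  have hlower {F : Set (Equiv.Perm V)} (hF : CyclicCut (edgeSwapGraph G) F) :
      4 * Fintype.card V - 8 ≤ F.ncard :=
    hunivUnicyclic.four_mul_card_sub_eight_le_of_cyclicCut htri hF
  obtain ⟨p, q, r, s, hpqrs⟩ := hunivUnicyclic.exists_disjointEdges htri
  have hcut := hpqrs.cyclicCut_outerNeighbors_square
  have hupper := hpqrs.card_outerNeighbors_square_le 1
  rw [card_edgeSwaps_univ, huni.2, Nat.mul_sub] at hupper
  refine ⟨⟨_, le_antisymm ?_ (hlower hcut), hcut⟩, ?_⟩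
  · rwa [Set.ncard_coe_finset]
  · rintro _ ⟨F, rfl, hF⟩
    exact hlower hF

theorem stmt_19 {n : ℕ} (hn : 4 ≤ n) (T : Set (Equiv.Perm (Fin n)))
    (hT : IsTranspositionSet T) (huni : IsUnicyclic (transGraph T))
    (htri : (transGraph T).CliqueFree 3) :
    IsLeast {k : ℕ | ∃ F : Set (Equiv.Perm (Fin n)),
      F.ncard = k ∧ CyclicCut (cayley T) F} (4 * n - 8) := by
  rw [TranspositionCayley.cayley_eq_edgeSwapGraph hT]
  simpa only [Fintype.card_fin] using stmt_19_general (transGraph T) huni htri
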